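/- arXiv:2301.02135 — 8 statements merged into one kernel-verified Lean document; each statement's English description precedes it below -/
import Mathlib

section
/- Let G be a subgroup of SL(2,ℤ) and let f : ℍ → ℂ be a holomorphic function satisfying the weight-2 transformation law f(γ·τ) = (cτ+d)² f(τ) for every γ = [[a,b],[c,d]] ∈ G and every τ ∈ ℍ. For γ ∈ G and τ₀ ∈ ℍ define the period P(γ, τ₀) := ∫₀¹ f(τ₀ + t(γ·τ₀ − τ₀))·(γ·τ₀ − τ₀) dt (the integral of f(τ)dτ along the straight segment from τ₀ to γ·τ₀, which lies in ℍ by convexity). Then P(γ, τ₀) is independent of the base point: P(γ, τ₀) = P(γ, τ₁) for all τ₀, τ₁ ∈ ℍ. -/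
/-!
The weight-2 law says that the differential `f(z) dz` is invariant under `z ↦ γ z`. Hence, if `F` is
a primitive of `f` on the upper half plane, so is `F ∘ γ`, and integrating `f` from `τ₀` to `τ₁`
in two ways gives `F (γ τ₁) - F (γ τ₀) = F τ₁ - F τ₀`. Exchanging the two middle terms shows that
the period `F (γ τ) - F τ` takes the same value at `τ₀` and `τ₁`.
-/

open Set UpperHalfPlane
open scoped MatrixGroups

section SegmentIntegral

variable {𝕜 E : Type*} [RCLike 𝕜] [NormedAddCommGroup E] [NormedSpace 𝕜 E] [NormedSpace ℝ E]

/-- The integral of `f(z) dz` along the straight segment from `a` to `b`, parametrized affinely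
by the unit interval. -/
noncomputable def segmentIntegral (f : 𝕜 → E) (a b : 𝕜) : E :=
  ∫ t in (0 : ℝ)..1, (b - a) • f (a + t • (b - a))

variable [CompleteSpace E] [IsScalarTower ℝ 𝕜 E] {f F : 𝕜 → E} {a b : 𝕜}

theorem segmentIntegral_eq_sub_of_hasDerivAt (hf : ContinuousOn f (segment ℝ a b))
    (hF : ∀ z ∈ segment ℝ a b, HasDerivAt F (f z) z) :
    segmentIntegral f a b = F b - F a := by
  have mem_segment : MapsTo (fun t : ℝ ↦ a + t • (b - a)) (Icc 0 1) (segment ℝ a b) := by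
    rw [segment_eq_image']
    exact mapsTo_image _ _
  have ftc := intervalIntegral.integral_unitInterval_deriv_eq_sub
    (hf.comp (by fun_prop) mem_segment) fun t ht ↦ hF _ (mem_segment ht)
  rwa [add_sub_cancel, ← intervalIntegral.integral_smul] at ftc

theorem segmentIntegral_map_eq_of_deriv_smul_comp_eq {U : Set 𝕜}
    (hUc : Convex ℝ U) (hUo : IsOpen U) (hf : DifferentiableOn 𝕜 f U) {φ φ' : 𝕜 → 𝕜}
    (hmaps : MapsTo φ U U) (hφ : ∀ z ∈ U, HasDerivAt φ (φ' z) z)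
    (hinv : ∀ z ∈ U, φ' z • f (φ z) = f z) (ha : a ∈ U) (hb : b ∈ U) :
    segmentIntegral f a (φ a) = segmentIntegral f b (φ b) := by
  obtain ⟨F, hFwithin⟩ := hUc.exists_forall_hasDerivWithinAt hf
  have hF (z) (hz : z ∈ U) : HasDerivAt F (f z) z := (hFwithin z hz).hasDerivAt (hUo.mem_nhds hz)
  have hFφ (z) (hz : z ∈ U) : HasDerivAt (F ∘ φ) (f z) z :=
    hinv z hz ▸ (hF (φ z) (hmaps hz)).scomp z (hφ z hz)
  have ftc {G : 𝕜 → E} (hG : ∀ z ∈ U, HasDerivAt G (f z) z) {x y : 𝕜} (hx : x ∈ U) (hy : y ∈ U) :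
      segmentIntegral f x y = G y - G x :=
    segmentIntegral_eq_sub_of_hasDerivAt (hf.continuousOn.mono (hUc.segment_subset hx hy))
      fun z hz ↦ hG z (hUc.segment_subset hx hy hz)
  have increments_eq : F (φ a) - F (φ b) = F a - F b := (ftc hFφ hb ha).symm.trans (ftc hF hb ha)
  rw [ftc hF ha (hmaps ha), ftc hF hb (hmaps hb)]
  exact sub_eq_sub_iff_sub_eq_sub.mpr increments_eq

end SegmentIntegral

theorem period_base_point_independent_general {E : Type*} [NormedAddCommGroup E] [NormedSpace ℂ E]
    [CompleteSpace E] {f : ℂ → E} (hf : DifferentiableOn ℂ f {z : ℂ | 0 < z.im})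
    {γ : GL (Fin 2) ℝ} (hγ : 0 < γ.val.det)
    (hmod : ∀ τ : ℍ, (γ.val.det : ℂ) • f ↑(γ • τ) = denom γ τ ^ 2 • f τ) (τ₀ τ₁ : ℍ) :
    segmentIntegral f τ₀ ↑(γ • τ₀) = segmentIntegral f τ₁ ↑(γ • τ₁) := by
  have hinv (τ : ℍ) : (γ.val.det / denom γ τ ^ 2 : ℂ) • f ↑(γ • τ) = f τ := by
    rw [div_eq_inv_mul, mul_smul, hmod, inv_smul_smul₀ (pow_ne_zero 2 (denom_ne_zero γ τ))]
  simpa only [ofComplex_apply] using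
    segmentIntegral_map_eq_of_deriv_smul_comp_eq (convex_halfSpace_im_gt 0) isOpen_upperHalfPlaneSet
      hf (φ := fun z ↦ ↑(γ • ofComplex z)) (fun z _ ↦ (γ • ofComplex z).im_pos)
      (fun z hz ↦ (hasStrictDerivAt_smul hγ ⟨z, hz⟩).hasDerivAt)
      (fun z hz ↦ by simpa only [ofComplex_apply_of_im_pos hz] using hinv ⟨z, hz⟩)
      τ₀.im_pos τ₁.im_pos

/-- For a subgroup `G ≤ SL(2,ℤ)` and a holomorphic function `f` on the upper
half plane satisfying the weight-2 transformation law, the period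
`P(γ, τ₀) = ∫₀¹ f(τ₀ + t(γ·τ₀ − τ₀))·(γ·τ₀ − τ₀) dt` is independent of the base point. -/
theorem period_base_point_independent
    (G : Subgroup (Matrix.SpecialLinearGroup (Fin 2) ℤ))
    (f : ℂ → ℂ)
    (hf : DifferentiableOn ℂ f {z : ℂ | 0 < z.im})
    (hmod : ∀ γ ∈ G, ∀ τ : UpperHalfPlane,
      f ((γ • τ : UpperHalfPlane) : ℂ) =
        (((γ : Matrix (Fin 2) (Fin 2) ℤ) 1 0 : ℂ) * (τ : ℂ) +
          ((γ : Matrix (Fin 2) (Fin 2) ℤ) 1 1 : ℂ)) ^ 2 * f (τ : ℂ))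
    (γ : Matrix.SpecialLinearGroup (Fin 2) ℤ) (hγ : γ ∈ G)
    (τ₀ τ₁ : UpperHalfPlane) :
    (∫ t in (0:ℝ)..1,
        f ((τ₀ : ℂ) + (t : ℂ) * (((γ • τ₀ : UpperHalfPlane) : ℂ) - (τ₀ : ℂ))) *
          (((γ • τ₀ : UpperHalfPlane) : ℂ) - (τ₀ : ℂ))) =
    (∫ t in (0:ℝ)..1,
        f ((τ₁ : ℂ) + (t : ℂ) * (((γ • τ₁ : UpperHalfPlane) : ℂ) - (τ₁ : ℂ))) *
          (((γ • τ₁ : UpperHalfPlane) : ℂ) - (τ₁ : ℂ))) := by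
  have hdet : (γ : GL (Fin 2) ℝ).val.det = 1 :=
    (Matrix.SpecialLinearGroup.map (Int.castRingHom ℝ) γ).det_coe
  simpa [segmentIntegral, mul_comm] using
    period_base_point_independent_general hf (γ := γ) (hdet ▸ one_pos)
      (fun τ ↦ by rw [hdet]; simpa [denom] using hmod γ hγ τ) τ₀ τ₁
end

section
/- Let G be a subgroup of SL(2,ℤ) and let f : ℍ → ℂ be a holomorphic function satisfying the weight-2 transformation law f(γ·τ) = (cτ+d)² f(τ) for every γ = [[a,b],[c,d]] ∈ G and every τ ∈ ℍ. Fix τ₀ ∈ ℍ and for γ ∈ G define P(γ) := ∫₀¹ f(τ₀ + t(γ·τ₀ − τ₀))·(γ·τ₀ − τ₀) dt. Then P is a group homomorphism from G to the additive group ℂ: P(γ₁γ₂) = P(γ₁) + P(γ₂) for all γ₁, γ₂ ∈ G. -/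
/-! The 1-form `f(z) dz` is holomorphic, so it has a primitive on the convex upper half plane; hence
segment integrals are additive along a broken line and obey the change of variables formula under
holomorphic maps. As `d(γz) = det γ (cz + d)⁻² dz`, the weight-2 law says that `f(z) dz` is
invariant under `γ`, so the integral from `γ₁τ₀` to `γ₁γ₂τ₀` equals the one from `τ₀` to `γ₂τ₀`. -/

open ContinuousLinearMap (toSpanSingleton)
open UpperHalfPlane (denom denom_ne_zero hasStrictDerivAt_smul ofComplex ofComplex_apply
  ofComplex_apply_of_im_pos upperHalfPlaneSet)
open scoped UpperHalfPlane

section SegmentIntegral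

variable {𝕜 E F : Type*} [RCLike 𝕜] [NormedAddCommGroup E] [NormedAddCommGroup F] [NormedSpace 𝕜 F]

theorem curveIntegral_segment_add_of_differentiableOn {s : Set 𝕜} {f : 𝕜 → F} {a b c : 𝕜}
    (hs : Convex ℝ s) (hf : DifferentiableOn 𝕜 f s) (ha : a ∈ s) (hb : b ∈ s) (hc : c ∈ s) :
    ∫ᶜ z in .segment a b, toSpanSingleton 𝕜 (f z) + ∫ᶜ z in .segment b c, toSpanSingleton 𝕜 (f z) =
      ∫ᶜ z in .segment a c, toSpanSingleton 𝕜 (f z) := by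
  let : NormedSpace ℝ F := .restrictScalars ℝ 𝕜 F
  have hform (z : 𝕜) (hz : z ∈ s) :
      HasDerivWithinAt (fun w ↦ toSpanSingleton 𝕜 (f w))
        (toSpanSingleton 𝕜 (derivWithin f s z)) s z :=
    (ContinuousLinearMap.toSpanSingletonCLE (𝕜 := 𝕜) (E := F)).hasFDerivAt.comp_hasDerivWithinAt z
      (hf z hz).hasDerivWithinAt
  refine hs.curveIntegral_segment_add_eq_of_hasFDerivWithinAt_symmetric
    (fun z hz ↦ (hform z hz).hasFDerivWithinAt.restrictScalars ℝ) ?_ ha hb hc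
  intro z _ x _ y _
  simpa using smul_comm ..

variable [CompleteSpace F]

theorem curveIntegral_segment_eq_sub_of_hasFDerivWithinAt [NormedSpace 𝕜 E] [NormedSpace ℝ E]
    {s : Set E} {ω : E → E →L[𝕜] F} {Φ : E → F} {a b : E} (hs : Convex ℝ s)
    (hω : ContinuousOn ω s) (hΦ : ∀ x ∈ s, HasFDerivWithinAt Φ (ω x) s x)
    (ha : a ∈ s) (hb : b ∈ s) :
    ∫ᶜ x in .segment a b, ω x = Φ b - Φ a := by
  let : NormedSpace ℝ F := .restrictScalars ℝ 𝕜 F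
  have hmaps : Set.MapsTo (AffineMap.lineMap a b) (Set.Icc (0 : ℝ) 1) s :=
    fun t ht ↦ hs.lineMap_mem ha hb ht
  have hline : ContinuousOn (AffineMap.lineMap a b) (Set.Icc (0 : ℝ) 1) := by fun_prop
  have hderiv (t : ℝ) (ht : t ∈ Set.Ioo (0 : ℝ) 1) :
      HasDerivAt (Φ ∘ AffineMap.lineMap a b) (ω (AffineMap.lineMap a b t) (b - a)) t :=
    ((hΦ _ (hmaps (Set.Ioo_subset_Icc_self ht))).restrictScalars ℝ |>.comp_hasDerivWithinAt t
      AffineMap.hasDerivWithinAt_lineMap hmaps).hasDerivAt (Icc_mem_nhds ht.1 ht.2)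
  rw [curveIntegral_segment, intervalIntegral.integral_eq_sub_of_hasDerivAt_of_le zero_le_one
    (ContinuousOn.comp (fun x hx ↦ (hΦ x hx).continuousWithinAt) hline hmaps) hderiv
    (((hω.comp hline hmaps).clm_apply continuousOn_const).intervalIntegrable_of_Icc zero_le_one)]
  simp

theorem curveIntegral_segment_eq_sub_of_hasDerivWithinAt {s : Set 𝕜} {f Φ : 𝕜 → F} {a b : 𝕜}
    (hs : Convex ℝ s) (hf : ContinuousOn f s) (hΦ : ∀ z ∈ s, HasDerivWithinAt Φ (f z) s z)
    (ha : a ∈ s) (hb : b ∈ s) :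
    ∫ᶜ z in .segment a b, toSpanSingleton 𝕜 (f z) = Φ b - Φ a :=
  curveIntegral_segment_eq_sub_of_hasFDerivWithinAt hs
    ((ContinuousLinearMap.toSpanSingletonCLE (𝕜 := 𝕜)).continuous.comp_continuousOn hf)
    (fun z hz ↦ (hΦ z hz).hasFDerivWithinAt) ha hb

theorem curveIntegral_segment_eq_of_pullback_eq {s t : Set 𝕜} {f g : 𝕜 → F} {φ φ' : 𝕜 → 𝕜}
    {a b : 𝕜} (hs : Convex ℝ s) (ht : Convex ℝ t) (hf : DifferentiableOn 𝕜 f t)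
    (hg : ContinuousOn g s) (hmaps : Set.MapsTo φ s t)
    (hφ : ∀ z ∈ s, HasDerivWithinAt φ (φ' z) s z) (hpullback : ∀ z ∈ s, φ' z • f (φ z) = g z)
    (ha : a ∈ s) (hb : b ∈ s) :
    ∫ᶜ z in .segment (φ a) (φ b), toSpanSingleton 𝕜 (f z) =
      ∫ᶜ z in .segment a b, toSpanSingleton 𝕜 (g z) := by
  obtain ⟨Φ, hΦ⟩ := ht.exists_forall_hasDerivWithinAt hf
  have hcomp (z : 𝕜) (hz : z ∈ s) : HasDerivWithinAt (Φ ∘ φ) (g z) s z :=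
    hpullback z hz ▸ (hΦ (φ z) (hmaps hz)).scomp z (hφ z hz) hmaps
  rw [curveIntegral_segment_eq_sub_of_hasDerivWithinAt ht hf.continuousOn hΦ (hmaps ha) (hmaps hb),
    curveIntegral_segment_eq_sub_of_hasDerivWithinAt hs hg hcomp ha hb, Function.comp_apply,
    Function.comp_apply]

end SegmentIntegral

section UpperHalfPlane

variable {E : Type*} [NormedAddCommGroup E] [NormedSpace ℂ E]

theorem curveIntegral_segment_smul_smul_of_weight_two [CompleteSpace E] {f : ℂ → E}
    (hf : DifferentiableOn ℂ f upperHalfPlaneSet) {g : GL (Fin 2) ℝ} (hg : 0 < g.det.val)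
    (hmod : ∀ τ : ℍ, (g.det.val : ℂ) • f ↑(g • τ) = denom g τ ^ 2 • f τ) (τ₁ τ₂ : ℍ) :
    ∫ᶜ z in .segment (↑(g • τ₁) : ℂ) ↑(g • τ₂), toSpanSingleton ℂ (f z) =
      ∫ᶜ z in .segment (τ₁ : ℂ) τ₂, toSpanSingleton ℂ (f z) := by
  have hconvex : Convex ℝ upperHalfPlaneSet := convex_halfSpace_im_gt 0
  have hderiv (z : ℂ) (hz : z ∈ upperHalfPlaneSet) :
      HasDerivWithinAt (fun w ↦ ↑(g • ofComplex w) : ℂ → ℂ) (g.det.val / denom g z ^ 2)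
        upperHalfPlaneSet z :=
    (hasStrictDerivAt_smul hg ⟨z, hz⟩).hasDerivAt.hasDerivWithinAt
  have hinvariant (z : ℂ) (hz : z ∈ upperHalfPlaneSet) :
      ((g.det.val : ℂ) / denom g z ^ 2) • f ↑(g • ofComplex z) = f z := by
    have hdenom : denom g z ^ 2 ≠ 0 := pow_ne_zero 2 (denom_ne_zero g ⟨z, hz⟩)
    rw [div_eq_inv_mul, mul_smul, ofComplex_apply_of_im_pos hz, hmod ⟨z, hz⟩,
      inv_smul_smul₀ hdenom]
  have hsegment := curveIntegral_segment_eq_of_pullback_eq hconvex hconvex hf hf.continuousOn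
    (fun z _ ↦ (g • ofComplex z).im_pos) hderiv hinvariant τ₁.im_pos τ₂.im_pos
  rwa [ofComplex_apply, ofComplex_apply] at hsegment

/-- The period of the 1-form `f(z) dz` attached to `g`: its integral along the segment from the
base point `τ₀` to `g • τ₀`. The form `v dz` is encoded as `toSpanSingleton ℂ v`, that is,
`h ↦ h • v`. -/
noncomputable def periodMap (f : ℂ → E) (τ₀ : ℍ) (g : GL (Fin 2) ℝ) : E :=
  ∫ᶜ z in .segment (τ₀ : ℂ) ↑(g • τ₀), toSpanSingleton ℂ (f z)

theorem periodMap_eq_intervalIntegral (f : ℂ → E) (τ₀ : ℍ) (g : GL (Fin 2) ℝ) :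
    periodMap f τ₀ g =
      ∫ t in (0 : ℝ)..1, (↑(g • τ₀) - τ₀ : ℂ) • f (τ₀ + t * (↑(g • τ₀) - τ₀)) := by
  simp [periodMap, curveIntegral_segment, AffineMap.lineMap_apply_module', add_comm]

theorem period_map_is_homomorphism_general [CompleteSpace E] (f : ℂ → E)
    (hf : DifferentiableOn ℂ f upperHalfPlaneSet) (τ₀ : ℍ) (g₁ g₂ : GL (Fin 2) ℝ)
    (hdet : 0 < g₁.det.val)
    (hmod : ∀ τ : ℍ, (g₁.det.val : ℂ) • f ↑(g₁ • τ) = denom g₁ τ ^ 2 • f τ) :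
    periodMap f τ₀ (g₁ * g₂) = periodMap f τ₀ g₁ + periodMap f τ₀ g₂ :=
  calc periodMap f τ₀ (g₁ * g₂)
      = ∫ᶜ z in .segment (τ₀ : ℂ) ↑(g₁ • g₂ • τ₀), toSpanSingleton ℂ (f z) := by
        rw [periodMap, mul_smul]
    _ = periodMap f τ₀ g₁ +
          ∫ᶜ z in .segment (↑(g₁ • τ₀) : ℂ) ↑(g₁ • g₂ • τ₀), toSpanSingleton ℂ (f z) :=
        (curveIntegral_segment_add_of_differentiableOn (convex_halfSpace_im_gt 0) hf τ₀.im_pos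
          (g₁ • τ₀).im_pos (g₁ • g₂ • τ₀).im_pos).symm
    _ = periodMap f τ₀ g₁ + periodMap f τ₀ g₂ := by
        rw [curveIntegral_segment_smul_smul_of_weight_two hf hdet hmod, ← periodMap]

end UpperHalfPlane

/-- For a subgroup `G ≤ SL(2,ℤ)` and a holomorphic function `f` on the upper
half plane satisfying the weight-2 transformation law, with a fixed base point `τ₀`, the
period map `P(γ) = ∫₀¹ f(τ₀ + t(γ·τ₀ − τ₀))·(γ·τ₀ − τ₀) dt` is a homomorphism from `G`
to the additive group `ℂ`. -/
theorem period_map_is_homomorphism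
    (G : Subgroup (Matrix.SpecialLinearGroup (Fin 2) ℤ))
    (f : ℂ → ℂ)
    (hf : DifferentiableOn ℂ f {z : ℂ | 0 < z.im})
    (hmod : ∀ γ ∈ G, ∀ τ : UpperHalfPlane,
      f ((γ • τ : UpperHalfPlane) : ℂ) =
        (((γ : Matrix (Fin 2) (Fin 2) ℤ) 1 0 : ℂ) * (τ : ℂ) +
          ((γ : Matrix (Fin 2) (Fin 2) ℤ) 1 1 : ℂ)) ^ 2 * f (τ : ℂ))
    (τ₀ : UpperHalfPlane)
    (P : Matrix.SpecialLinearGroup (Fin 2) ℤ → ℂ)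
    (hP : ∀ γ : Matrix.SpecialLinearGroup (Fin 2) ℤ,
      P γ = ∫ t in (0:ℝ)..1,
        f ((τ₀ : ℂ) + (t : ℂ) * (((γ • τ₀ : UpperHalfPlane) : ℂ) - (τ₀ : ℂ))) *
          (((γ • τ₀ : UpperHalfPlane) : ℂ) - (τ₀ : ℂ)))
    (γ₁ γ₂ : Matrix.SpecialLinearGroup (Fin 2) ℤ) (hγ₁ : γ₁ ∈ G) (hγ₂ : γ₂ ∈ G) :
    P (γ₁ * γ₂) = P γ₁ + P γ₂ := by
  have hperiod (γ : Matrix.SpecialLinearGroup (Fin 2) ℤ) : P γ = periodMap f τ₀ γ := by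
    simp only [hP, periodMap_eq_intervalIntegral, smul_eq_mul, mul_comm (f _),
      ModularGroup.sl_moeb]
  rw [hperiod, hperiod, hperiod, map_mul, map_mul]
  exact period_map_is_homomorphism_general f hf τ₀ γ₁ γ₂ (by simp) fun τ ↦ by
    simpa [denom] using! hmod γ₁ hγ₁ τ
end

section
/- Let h be a positive real number and let (aₙ)_{n≥1} be complex numbers with |aₙ| ≤ C·n^d for some constants C ≥ 0 and d ≥ 0, and define f : ℍ → ℂ by the (absolutely convergent) series f(τ) = ∑_{n≥1} aₙ · exp(2πi n τ / h). Then for every τ₀ ∈ ℍ the integral of 2πi·f along the vertical ray from τ₀ to i∞ satisfies ∫₀^∞ 2πi · f(τ₀ + i t) · i dt = −h · ∑_{n≥1} (aₙ/n) · exp(2πi n τ₀ / h), where both the integral and the series converge absolutely. -/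
open Real MeasureTheory

/-!
Along the ray, the `n`-th term of the series is its value at `τ₀` times `exp (-(2πn/h) t)`, and
`∫₀^∞ exp (-p t) dt = 1/p`, so integrating term by term produces the factor `h/(2πn)`. The series
may be integrated term by term because the integrals of the norms of its terms are a multiple of
the norms of the terms of the target series.
-/

open Asymptotics Filter Set

theorem integrable_tsum_of_summable_integral_norm {α ι E : Type*} [MeasurableSpace α]
    {μ : Measure α} [Countable ι] [NormedAddCommGroup E] [CompleteSpace E] {F : ι → α → E}
    (hF_int : ∀ i, Integrable (F i) μ) (hF_sum : Summable fun i => ∫ x, ‖F i x‖ ∂μ) :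
    Integrable (fun x => ∑' i, F i x) μ := by
  have hL1_sum : ∑' i, ‖(hF_int i).toL1 (F i)‖ₑ ≠ ⊤ := by
    rw [tsum_enorm_ne_top_iff_summable_norm]
    simpa only [L1.norm_of_fun_eq_integral_norm] using hF_sum
  have hL1_coe : ∀ᵐ x ∂μ, ∀ i, (hF_int i).toL1 (F i) x = F i x :=
    ae_all_iff.2 fun i => (hF_int i).coeFn_toL1
  refine (L1.integrable_coeFn (∑' i, (hF_int i).toL1 (F i))).congr ?_
  filter_upwards [Lp.coeFn_tsum hL1_sum, hL1_coe] with x hx hcoe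
  rw [hx, tsum_congr hcoe]

section ExponentialSeries

theorem integrableOn_mul_cexp_neg_mul_Ioi (c : ℂ) {p : ℂ} (hp : 0 < p.re) :
    IntegrableOn (fun t : ℝ => c * Complex.exp (-p * t)) (Ioi 0) :=
  (integrableOn_exp_mul_complex_Ioi (by simpa using hp) 0).const_mul c

theorem integral_mul_cexp_neg_mul_Ioi (c : ℂ) {p : ℂ} (hp : 0 < p.re) :
    ∫ t in Ioi (0 : ℝ), c * Complex.exp (-p * t) = c / p := by
  rw [integral_const_mul, integral_exp_mul_complex_Ioi (by simpa using hp)]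
  simp [div_eq_mul_inv]

theorem integral_norm_mul_cexp_neg_mul_Ioi (c : ℂ) {p : ℂ} (hp : 0 < p.re) :
    ∫ t in Ioi (0 : ℝ), ‖c * Complex.exp (-p * t)‖ = ‖c‖ / p.re := by
  have norm_eq (t : ℝ) : ‖c * Complex.exp (-p * t)‖ = ‖c‖ * rexp (-p.re * t) := by
    simp [Complex.norm_exp]
  simp only [norm_eq]
  rw [integral_const_mul, integral_exp_mul_Ioi (by simpa using hp)]
  simp [div_eq_mul_inv]

variable {ι : Type*} [Countable ι] {c p : ι → ℂ}

theorem integrableOn_tsum_mul_cexp_neg_mul_Ioi (hp : ∀ i, 0 < (p i).re)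
    (hsum : Summable fun i => ‖c i‖ / (p i).re) :
    IntegrableOn (fun t : ℝ => ∑' i, c i * Complex.exp (-p i * t)) (Ioi 0) :=
  integrable_tsum_of_summable_integral_norm
    (fun i => integrableOn_mul_cexp_neg_mul_Ioi (c i) (hp i))
    (by simpa only [integral_norm_mul_cexp_neg_mul_Ioi _ (hp _)] using hsum)

theorem integral_tsum_mul_cexp_neg_mul_Ioi (hp : ∀ i, 0 < (p i).re)
    (hsum : Summable fun i => ‖c i‖ / (p i).re) :
    ∫ t in Ioi (0 : ℝ), ∑' i, c i * Complex.exp (-p i * t) = ∑' i, c i / p i := by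
  rw [← integral_tsum_of_summable_integral_norm
    (fun i => integrableOn_mul_cexp_neg_mul_Ioi (c i) (hp i))
    (by simpa only [integral_norm_mul_cexp_neg_mul_Ioi _ (hp _)] using hsum)]
  exact tsum_congr fun i => integral_mul_cexp_neg_mul_Ioi (c i) (hp i)

end ExponentialSeries

theorem summable_mul_pow_of_isBigO_rpow {𝕜 : Type*} [RCLike 𝕜] {a : ℕ → 𝕜} {d : ℝ} {q : 𝕜}
    (ha : a =O[atTop] fun n => (n : ℝ) ^ d) (hq : ‖q‖ < 1) :
    Summable fun n => a n * q ^ n := by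
  have hpow : a =O[atTop] fun n => ((n ^ ⌈d⌉₊ : ℕ) : 𝕜) := by
    refine ha.trans (.of_bound' ?_)
    filter_upwards [eventually_ge_atTop 1] with n hn
    rw [norm_of_nonneg (by positivity), RCLike.norm_natCast, Nat.cast_pow, ← rpow_natCast]
    exact rpow_le_rpow_of_exponent_le (by exact_mod_cast hn) (Nat.le_ceil d)
  exact (summable_norm_mul_geometric_of_norm_lt_one' hq hpow).of_norm

theorem summable_div_mul_cexp_of_isBigO_rpow {h : ℝ} (hh : 0 < h) {a : ℕ → ℂ} {d : ℝ}
    (ha : a =O[atTop] fun n => (n : ℝ) ^ d) {τ : ℂ} (hτ : 0 < τ.im) :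
    Summable fun n : ℕ => a (n + 1) / ((n : ℂ) + 1) *
      Complex.exp (2 * (π : ℂ) * Complex.I * ((n : ℂ) + 1) * τ / (h : ℂ)) := by
  have hdiv : (fun n => a n / n) =O[atTop] fun n => (n : ℝ) ^ d := by
    refine .trans (.of_bound' ?_) ha
    filter_upwards [eventually_ge_atTop 1] with n hn
    rw [norm_div, Complex.norm_natCast]
    exact div_le_self (norm_nonneg _) (by exact_mod_cast hn)
  have hsum := summable_mul_pow_of_isBigO_rpow hdiv (Function.Periodic.norm_qParam_lt_one hh hτ)
  refine ((summable_nat_add_iff 1).2 hsum).congr fun n => ?_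
  rw [Function.Periodic.qParam, ← Complex.exp_nat_mul]
  push_cast
  ring_nf

theorem cexp_two_pi_I_mul_add_mul_I (h x τ t : ℂ) :
    Complex.exp (2 * π * Complex.I * x * (τ + t * Complex.I) / h) =
      Complex.exp (2 * π * Complex.I * x * τ / h) * Complex.exp (-(2 * π * x / h) * t) := by
  rw [← Complex.exp_add]
  congr 1
  linear_combination (2 * π * x * t / h) * Complex.I_sq

theorem integral_along_vertical_ray_general
    (h : ℝ) (hh : 0 < h) (a : ℕ → ℂ) (f : ℂ → ℂ) (τ₀ : ℂ)
    (hf : ∀ z : ℂ, τ₀.im < z.im →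
      f z = ∑' n : ℕ, a (n + 1) *
        Complex.exp (2 * (π : ℂ) * Complex.I * ((n : ℂ) + 1) * z / (h : ℂ)))
    (hsum : Summable fun n : ℕ => a (n + 1) / ((n : ℂ) + 1) *
      Complex.exp (2 * (π : ℂ) * Complex.I * ((n : ℂ) + 1) * τ₀ / (h : ℂ))) :
    IntegrableOn
      (fun t : ℝ => 2 * (π : ℂ) * Complex.I * f (τ₀ + (t : ℂ) * Complex.I) * Complex.I)
      (Set.Ioi (0 : ℝ)) ∧
    (∫ t in Set.Ioi (0 : ℝ),
        2 * (π : ℂ) * Complex.I * f (τ₀ + (t : ℂ) * Complex.I) * Complex.I) =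
      -(h : ℂ) * ∑' n : ℕ, a (n + 1) / ((n : ℂ) + 1) *
        Complex.exp (2 * (π : ℂ) * Complex.I * ((n : ℂ) + 1) * τ₀ / (h : ℂ)) := by
  let c (n : ℕ) : ℂ := a (n + 1) * Complex.exp (2 * π * Complex.I * (n + 1) * τ₀ / h)
  let p (n : ℕ) : ℝ := 2 * π * (n + 1) / h
  have hp (n : ℕ) : 0 < (p n : ℂ).re := show 0 < 2 * π * (n + 1) / h by positivity
  have hterm (n : ℕ) : c n / p n = h / (2 * π) * (a (n + 1) / (n + 1) *
      Complex.exp (2 * π * Complex.I * (n + 1) * τ₀ / h)) := by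
    simp only [c, p]
    push_cast
    field_simp
  have hcp : Summable fun n => ‖c n‖ / (p n : ℂ).re := by
    refine (hsum.mul_left ((h : ℂ) / (2 * π))).norm.congr fun n => ?_
    rw [← hterm, norm_div, Complex.norm_of_nonneg (r := p n) (hp n).le, Complex.ofReal_re]
  have hray : EqOn (fun t : ℝ => -(2 * π) * ∑' n, c n * Complex.exp (-p n * t))
      (fun t => 2 * π * Complex.I * f (τ₀ + t * Complex.I) * Complex.I) (Ioi 0) := by
    intro t ht
    have hft : f (τ₀ + t * Complex.I) = ∑' n, c n * Complex.exp (-p n * t) := by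
      rw [hf _ (by simpa using ht)]
      simp [c, p, cexp_two_pi_I_mul_add_mul_I, mul_assoc (a _)]
    simp only [hft]
    linear_combination (-2 * π * ∑' n, c n * Complex.exp (-p n * t)) * Complex.I_sq
  refine ⟨IntegrableOn.congr_fun
    ((integrableOn_tsum_mul_cexp_neg_mul_Ioi hp hcp).const_mul _) hray measurableSet_Ioi, ?_⟩
  rw [← setIntegral_congr_fun measurableSet_Ioi hray, integral_const_mul,
    integral_tsum_mul_cexp_neg_mul_Ioi hp hcp]
  simp only [hterm, tsum_mul_left]
  rw [← mul_assoc]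
  congr 1
  field_simp

/-- For a cusp-form-type Fourier series `f(τ) = ∑_{n≥1} aₙ exp(2πi n τ / h)`
with polynomially bounded coefficients, the integral of `2πi·f` along the vertical ray
from `τ₀` to `i∞` equals `−h·∑_{n≥1} (aₙ/n) exp(2πi n τ₀ / h)`, with the integral and
the series converging absolutely. -/
theorem integral_along_vertical_ray
    (h : ℝ) (hh : 0 < h) (a : ℕ → ℂ) (C d : ℝ) (hC : 0 ≤ C) (hd : 0 ≤ d)
    (ha : ∀ n : ℕ, 1 ≤ n → ‖a n‖ ≤ C * (n : ℝ) ^ d)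
    (f : ℂ → ℂ)
    (hf : ∀ z : ℂ, 0 < z.im →
      f z = ∑' n : ℕ, a (n + 1) *
        Complex.exp (2 * (π : ℂ) * Complex.I * ((n : ℂ) + 1) * z / (h : ℂ)))
    (τ₀ : ℂ) (hτ₀ : 0 < τ₀.im) :
    IntegrableOn
      (fun t : ℝ => 2 * (π : ℂ) * Complex.I * f (τ₀ + (t : ℂ) * Complex.I) * Complex.I)
      (Set.Ioi (0 : ℝ)) ∧
    Summable (fun n : ℕ => a (n + 1) / ((n : ℂ) + 1) *
      Complex.exp (2 * (π : ℂ) * Complex.I * ((n : ℂ) + 1) * τ₀ / (h : ℂ))) ∧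
    (∫ t in Set.Ioi (0 : ℝ),
        2 * (π : ℂ) * Complex.I * f (τ₀ + (t : ℂ) * Complex.I) * Complex.I) =
      -(h : ℂ) * ∑' n : ℕ, a (n + 1) / ((n : ℂ) + 1) *
        Complex.exp (2 * (π : ℂ) * Complex.I * ((n : ℂ) + 1) * τ₀ / (h : ℂ)) := by
  have ha_isBigO : a =O[atTop] fun n => (n : ℝ) ^ d := .of_bound C <|
    (eventually_ge_atTop 1).mono fun n hn => (ha n hn).trans (by gcongr; exact le_norm_self _)
  have hsum := summable_div_mul_cexp_of_isBigO_rpow hh ha_isBigO hτ₀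
  obtain ⟨hint, heq⟩ := integral_along_vertical_ray_general h hh a f τ₀
    (fun z hz => hf z (hτ₀.trans hz)) hsum
  exact ⟨hint, hsum, heq⟩
end

section
/- Let σ_S = (2 5)(3 7)(4 8)(6 9) and σ_R = (1 2 6)(3 8 5)(4 9 7) be permutations of {1,…,9}. Then the subgroup of S₉ generated by σ_S and σ_R has order 504. -/
/-!
The group is `PSL(2, 8)` acting on the nine points of the projective line over `𝔽₈ = 𝔽₂(ω)`, where
`ω ^ 3 = ω + 1`: for a suitable labelling of `Fin 9` by points of that line, both generators are
Möbius transformations. A Möbius transformation fixing `∞`, `0` and `1` is trivial, so only the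
identity of the group fixes the three points with these labels. On the other hand explicit words in
the generators show that the group is 3-transitive. Hence it is sharply 3-transitive, of order
`9 * 8 * 7`.
-/

open MulAction OnePoint

section MultiplyTransitive

variable {G α M β : Type*} [Group G] [MulAction G α] [Group M] [MulAction M β] {f : α → β}

theorem isMultiplyPretransitive_of_forall_exists_smul_eq {n : ℕ} (x : Fin n ↪ α)
    (h : ∀ (k : Fin n) (y : α), (∀ j < k, y ≠ x j) →
      ∃ g : G, (∀ j < k, g • x j = x j) ∧ g • y = x k) :
    IsMultiplyPretransitive G α n := by
  have to_base (z : Fin n ↪ α) (k : ℕ) : ∃ g : G, ∀ i : Fin n, (i : ℕ) < k → g • z i = x i := by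
    induction k with
    | zero => exact ⟨1, fun i hi ↦ absurd hi (Nat.not_lt_zero _)⟩
    | succ k ih =>
      obtain ⟨g, hg⟩ := ih
      by_cases hk : k < n
      · have hfresh : ∀ j < (⟨k, hk⟩ : Fin n), g • z ⟨k, hk⟩ ≠ x j := fun j hj heq ↦
          hj.ne' (z.injective (MulAction.injective g (heq.trans (hg j hj).symm)))
        obtain ⟨g', hfix, hmove⟩ := h ⟨k, hk⟩ _ hfresh
        refine ⟨g' * g, fun i hi ↦ ?_⟩
        rw [mul_smul]
        rcases Nat.lt_succ_iff_lt_or_eq.mp hi with hlt | heq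
        · rw [hg i hlt, hfix i hlt]
        · obtain rfl : i = ⟨k, hk⟩ := Fin.ext heq
          exact hmove
      · exact ⟨g, fun i _ ↦ hg i (i.isLt.trans_le (not_lt.mp hk))⟩
  refine (isPretransitive_iff_base x).mpr fun y ↦ ?_
  obtain ⟨g, hg⟩ := to_base y n
  refine ⟨g⁻¹, ?_⟩
  rw [inv_smul_eq_iff]
  ext i
  exact (hg i i.isLt).symm

theorem card_eq_descFactorial_of_fixingSubgroup_eq_bot [Finite α] {s : Set α}
    (h : IsMultiplyPretransitive G α s.ncard) (hs : fixingSubgroup G s = ⊥) :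
    Nat.card G = (Nat.card α).descFactorial s.ncard := by
  rw [Nat.descFactorial_eq_factorial_mul_choose, mul_comm, ← h.index_of_fixingSubgroup_eq, hs,
    Subgroup.index_bot]

theorem forall_closure_exists_map_smul_eq {s : Set G}
    (hs : ∀ g ∈ s, ∃ m : M, ∀ x, f (g • x) = m • f x) (g : Subgroup.closure s) :
    ∃ m : M, ∀ x, f (g • x) = m • f x := by
  obtain ⟨g, hg⟩ := g
  change ∃ m : M, ∀ x, f (g • x) = m • f x
  induction hg using Subgroup.closure_induction with
  | mem g hg => exact hs g hg
  | one => exact ⟨1, by simp only [one_smul, implies_true]⟩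
  | mul g₁ g₂ _ _ ih₁ ih₂ =>
    obtain ⟨m₁, h₁⟩ := ih₁
    obtain ⟨m₂, h₂⟩ := ih₂
    exact ⟨m₁ * m₂, fun x ↦ by rw [mul_smul, h₁, h₂, mul_smul]⟩
  | inv g _ ih =>
    obtain ⟨m, h⟩ := ih
    exact ⟨m⁻¹, fun x ↦ by rw [eq_inv_smul_iff, ← h, smul_inv_smul]⟩

theorem injective_of_is_two_pretransitive [IsMultiplyPretransitive G α 2]
    (hf : ∀ g : G, ∃ m : M, ∀ x, f (g • x) = m • f x) {a b : α} (hab : f a ≠ f b) :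
    Function.Injective f := by
  intro x y hxy
  by_contra hne
  obtain ⟨g, rfl, rfl⟩ := is_two_pretransitive_iff.mp ‹IsMultiplyPretransitive G α 2› hne
    (ne_of_apply_ne f hab)
  obtain ⟨m, hm⟩ := hf g
  exact hab (by rw [hm, hm, hxy])

end MultiplyTransitive

section Mobius

variable {K : Type*} [Field K] [DecidableEq K]

section

variable {a b c d : K} (hdet : (!![a, b; c, d] : Matrix (Fin 2) (Fin 2) K).det ≠ 0)

theorem mkOfDetNeZero_smul_infty {w : K} (hc : c ≠ 0) (hw : a = w * c) :
    Matrix.GeneralLinearGroup.mkOfDetNeZero _ hdet • (∞ : OnePoint K) = w := by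
  simp [smul_infty_eq_ite, Matrix.GeneralLinearGroup.mkOfDetNeZero, hc, hw]

theorem mkOfDetNeZero_smul_some_eq_infty {z : K} (hz : c * z + d = 0) :
    Matrix.GeneralLinearGroup.mkOfDetNeZero _ hdet • (z : OnePoint K) = ∞ := by
  simp [smul_some_eq_ite, Matrix.GeneralLinearGroup.mkOfDetNeZero, hz]

theorem mkOfDetNeZero_smul_some {z w : K} (hz : c * z + d ≠ 0) (hw : a * z + b = w * (c * z + d)) :
    Matrix.GeneralLinearGroup.mkOfDetNeZero _ hdet • (z : OnePoint K) = w := by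
  simp [smul_some_eq_ite, Matrix.GeneralLinearGroup.mkOfDetNeZero, hz, hw]

end

theorem smul_eq_self_of_fixes_infty_zero_one {g : GL (Fin 2) K} (h_infty : g • (∞ : OnePoint K) = ∞)
    (h_zero : g • ((0 : K) : OnePoint K) = (0 : K)) (h_one : g • ((1 : K) : OnePoint K) = (1 : K))
    (p : OnePoint K) : g • p = p := by
  have h10 : g 1 0 = 0 := smul_infty_eq_self_iff.mp h_infty
  have h11 : g 1 1 ≠ 0 := fun h ↦ g.det_ne_zero (by simp [Matrix.det_fin_two, h10, h])
  have h01 : g 0 1 = 0 := by simpa [smul_some_eq_ite, h10, h11] using h_zero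
  have h00 : g 0 0 = g 1 1 := by
    simpa [smul_some_eq_ite, h10, h11, h01, div_eq_one_iff_eq] using h_one
  cases p with
  | infty => exact h_infty
  | coe z => simp [smul_some_eq_ite, h10, h11, h01, h00]

theorem card_eq_descFactorial_three_of_map_smul_eq {G α : Type*} [Group G] [MulAction G α]
    [FaithfulSMul G α] [Finite α] [IsMultiplyPretransitive G α 3] {f : α → OnePoint K}
    (hf : ∀ g : G, ∃ m : GL (Fin 2) K, ∀ x, f (g • x) = m • f x) {a b c : α}
    (ha : f a = ∞) (hb : f b = (0 : K)) (hc : f c = (1 : K)) :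
    Nat.card G = (Nat.card α).descFactorial 3 := by
  have hab : f a ≠ f b := by simp [ha, hb]
  have hac : f a ≠ f c := by simp [ha, hc]
  have hbc : f b ≠ f c := by simp [hb, hc]
  have hcard : ({a, b, c} : Set α).ncard = 3 :=
    Set.ncard_eq_three.mpr ⟨a, b, c, ne_of_apply_ne f hab, ne_of_apply_ne f hac,
      ne_of_apply_ne f hbc, rfl⟩
  have hle : 3 ≤ Nat.card α := hcard ▸ Set.ncard_le_card _
  have : IsMultiplyPretransitive G α 2 := isMultiplyPretransitive_of_le (n := 3) (by norm_num) hle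
  have hinj : Function.Injective f := injective_of_is_two_pretransitive hf hab
  rw [← hcard]
  refine card_eq_descFactorial_of_fixingSubgroup_eq_bot (by rwa [hcard])
    ((Subgroup.eq_bot_iff_forall _).mpr fun g hg ↦ ?_)
  obtain ⟨m, hm⟩ := hf g
  have hfix : ∀ x ∈ ({a, b, c} : Set α), m • f x = f x := fun x hx ↦ by
    rw [← hm, (mem_fixingSubgroup_iff G).mp hg x hx]
  have htriv : ∀ p : OnePoint K, m • p = p :=
    smul_eq_self_of_fixes_infty_zero_one (ha ▸ hfix a (by simp)) (hb ▸ hfix b (by simp))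
      (hc ▸ hfix c (by simp))
  refine FaithfulSMul.eq_of_smul_eq_smul fun x : α ↦ hinj ?_
  rw [hm, htriv, one_smul]

end Mobius

/-- The involution `σ_S`, with the point `9` written as `0`. -/
def sigmaS : Equiv.Perm (Fin 9) := c[2, 5] * c[3, 7] * c[4, 8] * c[6, 9]

/-- The element `σ_R` of order three, with the point `9` written as `0`. -/
def sigmaR : Equiv.Perm (Fin 9) := c[1, 2, 6] * c[3, 8, 5] * c[4, 9, 7]

/-- The monodromy group, generated by `σ_S` and `σ_R`. -/
def monodromyGroup : Subgroup (Equiv.Perm (Fin 9)) := Subgroup.closure {sigmaS, sigmaR}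

namespace monodromyGroup

/-- Multiplication by `ω` on the projective line over `𝔽₈`, in the coordinate `label` below. -/
def mulOmega : Equiv.Perm (Fin 9) := c[2, 4, 5, 6, 8, 7, 3]

/-- Translation by `ω` on the projective line over `𝔽₈`, in the coordinate `label` below. -/
def addOmega : Equiv.Perm (Fin 9) := c[1, 4] * c[2, 6] * c[3, 7] * c[5, 8]

theorem sigmaS_mem : sigmaS ∈ monodromyGroup := Subgroup.subset_closure (by simp)

theorem sigmaR_mem : sigmaR ∈ monodromyGroup := Subgroup.subset_closure (by simp)

theorem finRotate_mem : finRotate 9 ∈ monodromyGroup := by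
  have hword : finRotate 9 = sigmaR * sigmaS := by decide
  rw [hword]
  exact mul_mem sigmaR_mem sigmaS_mem

theorem mulOmega_mem : mulOmega ∈ monodromyGroup := by
  have hword : mulOmega = finRotate 9 * sigmaR * finRotate 9 ^ 3 := by decide
  rw [hword]
  exact mul_mem (mul_mem finRotate_mem sigmaR_mem) (pow_mem finRotate_mem 3)

theorem addOmega_mem : addOmega ∈ monodromyGroup := by
  have hword : addOmega = sigmaS * sigmaR * finRotate 9 ^ 2 := by decide
  rw [hword]
  exact mul_mem (mul_mem sigmaS_mem sigmaR_mem) (pow_mem finRotate_mem 2)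

theorem exists_map_eq_zero (y : Fin 9) : ∃ g ∈ monodromyGroup, g y = 0 := by
  have hpow : ∀ y : Fin 9, ∃ k : Fin 9, (finRotate 9 ^ (k : ℕ)) y = 0 := by decide
  obtain ⟨k, hk⟩ := hpow y
  exact ⟨_, pow_mem finRotate_mem k, hk⟩

theorem exists_fix_zero_map_eq_one {y : Fin 9} (h0 : y ≠ 0) :
    ∃ g ∈ monodromyGroup, g 0 = 0 ∧ g y = 1 := by
  have hword : ∀ y : Fin 9, y ≠ 0 → ∃ (i : Fin 2) (k : Fin 7),
      (addOmega ^ (i : ℕ) * mulOmega ^ (k : ℕ)) 0 = 0 ∧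
      (addOmega ^ (i : ℕ) * mulOmega ^ (k : ℕ)) y = 1 := by decide
  obtain ⟨i, k, h⟩ := hword y h0
  exact ⟨_, mul_mem (pow_mem addOmega_mem i) (pow_mem mulOmega_mem k), h⟩

theorem exists_fix_zero_one_map_eq_two {y : Fin 9} (h0 : y ≠ 0) (h1 : y ≠ 1) :
    ∃ g ∈ monodromyGroup, g 0 = 0 ∧ g 1 = 1 ∧ g y = 2 := by
  have hpow : ∀ y : Fin 9, y ≠ 0 → y ≠ 1 → ∃ k : Fin 7,
      (mulOmega ^ (k : ℕ)) 0 = 0 ∧ (mulOmega ^ (k : ℕ)) 1 = 1 ∧ (mulOmega ^ (k : ℕ)) y = 2 := by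
    decide
  obtain ⟨k, h⟩ := hpow y h0 h1
  exact ⟨_, pow_mem mulOmega_mem k, h⟩

theorem isMultiplyPretransitive : IsMultiplyPretransitive monodromyGroup (Fin 9) 3 := by
  refine isMultiplyPretransitive_of_forall_exists_smul_eq (Fin.castLEEmb (by norm_num))
    fun k y hy ↦ ?_
  fin_cases k
  · obtain ⟨g, hg, h⟩ := exists_map_eq_zero y
    exact ⟨⟨g, hg⟩, by simp, h⟩
  · obtain ⟨g, hg, h0, h⟩ := exists_fix_zero_map_eq_one (hy 0 (by decide))
    exact ⟨⟨g, hg⟩, by simpa [Fin.forall_fin_succ] using h0, h⟩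
  · obtain ⟨g, hg, h0, h1, h⟩ := exists_fix_zero_one_map_eq_two (hy 0 (by decide))
      (hy 1 (by decide))
    exact ⟨⟨g, hg⟩, by simpa [Fin.forall_fin_succ] using ⟨h0, h1⟩, h⟩

section Label

variable {K : Type*} [Field K]

/-- The labelling of the nine points by the projective line over `𝔽₈`, where `ω` stands for a
root of `X ^ 3 + X + 1` over `𝔽₂`. The points `0` and `1` are sent to `∞` and `0`, and the powers
of `ω` follow the seven-cycle `mulOmega`. -/
def label (ω : K) : Fin 9 → OnePoint K :=
  ![∞, (0 : K), (1 : K), ↑(ω ^ 6), ω, ↑(ω ^ 2), ↑(ω ^ 3), ↑(ω ^ 5), ↑(ω ^ 4)]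

variable [CharP K 2] [DecidableEq K] {ω : K}

theorem exists_label_sigmaS (hω : ω ^ 3 = ω + 1) :
    ∃ m : GL (Fin 2) K, ∀ x, label ω (sigmaS x) = m • label ω x := by
  have hdet : (!![ω ^ 3, 0; 1, ω ^ 3] : Matrix (Fin 2) (Fin 2) K).det ≠ 0 := by
    rw [Matrix.det_fin_two_of]
    grind
  refine ⟨.mkOfDetNeZero _ hdet, fun x ↦ Eq.symm ?_⟩
  match x with
  | 0 => exact mkOfDetNeZero_smul_infty hdet one_ne_zero (mul_one _).symm
  | 6 => exact mkOfDetNeZero_smul_some_eq_infty hdet (by grind)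
  | 1 | 2 | 3 | 4 | 5 | 7 | 8 => exact mkOfDetNeZero_smul_some hdet (by grind) (by grind)

theorem exists_label_sigmaR (hω : ω ^ 3 = ω + 1) :
    ∃ m : GL (Fin 2) K, ∀ x, label ω (sigmaR x) = m • label ω x := by
  have hdet : (!![ω ^ 5, ω; 1, ω] : Matrix (Fin 2) (Fin 2) K).det ≠ 0 := by
    rw [Matrix.det_fin_two_of]
    grind
  refine ⟨.mkOfDetNeZero _ hdet, fun x ↦ Eq.symm ?_⟩
  match x with
  | 0 => exact mkOfDetNeZero_smul_infty hdet one_ne_zero (mul_one _).symm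
  | 4 => exact mkOfDetNeZero_smul_some_eq_infty hdet (by grind)
  | 1 | 2 | 3 | 5 | 6 | 7 | 8 => exact mkOfDetNeZero_smul_some hdet (by grind) (by grind)

theorem exists_label_smul (hω : ω ^ 3 = ω + 1) (g : monodromyGroup) :
    ∃ m : GL (Fin 2) K, ∀ x, label ω (g • x) = m • label ω x := by
  refine forall_closure_exists_map_smul_eq (fun g hg ↦ ?_) g
  rcases hg with rfl | rfl
  · exact exists_label_sigmaS hω
  · exact exists_label_sigmaR hω

end Label

end monodromyGroup

open Polynomial in
theorem exists_pow_three_eq_add_one (K : Type*) [Field K] [IsAlgClosed K] :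
    ∃ ω : K, ω ^ 3 = ω + 1 := by
  have hdeg : (X ^ 3 - X - 1 : K[X]).degree = 3 := by compute_degree!
  obtain ⟨ω, hω⟩ := IsAlgClosed.exists_root _ (hdeg.trans_ne (by norm_num))
  exact ⟨ω, by simpa [sub_sub, sub_eq_zero] using hω⟩

/-- The subgroup of `S₉` generated by `σ_S = (2 5)(3 7)(4 8)(6 9)` and
`σ_R = (1 2 6)(3 8 5)(4 9 7)` has order `504`. (In `Equiv.Perm (Fin 9)` the numeral `9`
denotes the element `0` of `Fin 9`, so the labels `1,…,9` exhaust `Fin 9`.) -/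
theorem monodromy_group_order_504 :
    let σS : Equiv.Perm (Fin 9) := c[2, 5] * c[3, 7] * c[4, 8] * c[6, 9]
    let σR : Equiv.Perm (Fin 9) := c[1, 2, 6] * c[3, 8, 5] * c[4, 9, 7]
    Nat.card (Subgroup.closure {σS, σR} : Subgroup (Equiv.Perm (Fin 9))) = 504 := by
  classical
  change Nat.card monodromyGroup = 504
  have := monodromyGroup.isMultiplyPretransitive
  obtain ⟨ω, hω⟩ := exists_pow_three_eq_add_one (AlgebraicClosure (ZMod 2))
  rw [card_eq_descFactorial_three_of_map_smul_eq (monodromyGroup.exists_label_smul hω)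
    (a := 0) (b := 1) (c := 2) rfl rfl rfl, Nat.card_fin]
  rfl
end

section
/- Let σ_S = (2 5)(3 7)(4 8)(6 9) and σ_R = (1 2 6)(3 8 5)(4 9 7) be permutations of {1,…,9}, and let H ≤ S₉ be the subgroup they generate. Then H is isomorphic (as a group) to SL(2, F₈), the group of 2×2 matrices of determinant 1 over the field with 8 elements (which, since its center is trivial in characteristic 2, coincides with PSL(2, F₈)). -/
/-!
Let `a` be a root of `X ^ 3 + X + 1` in a field `K` with 8 elements, so that `a⁻¹ = a ^ 2 + 1`.
The group `SL(2, K)` acts faithfully on the nine points of the projective line over `K`, because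
its centre is trivial in characteristic 2. Under a suitable labelling of these points by `1, …, 9`,
the permutation `(2 5)(3 7)(4 8)(6 9)` is the translation `S : x ↦ x + 1`, and
`(1 2 6)(3 8 5)(4 9 7)` is the map `R : x ↦ a ^ 2 / (x + a)`, which cycles `∞ ↦ 0 ↦ a ↦ ∞`.

It remains to see that `S` and `R` generate `SL(2, K)`. The translations in the subgroup `H` they
generate form an additive subgroup `T` of `K` containing `1`. The word `R S R S R⁻¹ S R` fixes `∞`;
conjugation by it is multiplication by `(a ^ 2 + a) ^ 2 = a` on translations, so `T` is stable under
multiplication by `a` and therefore equals `K`. All translations, together with one element moving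
`∞`, generate `SL(2, K)`.
-/

open Matrix Matrix.SpecialLinearGroup Projectivization
open scoped LinearAlgebra.Projectivization MatrixGroups

section PermutationRepresentation

variable {G X α : Type*} [Group G]

lemma nonempty_closure_image_mulEquiv {M : Type*} [Group M] {φ : G →* M}
    (hφ : Function.Injective φ) {s : Set G} (hs : Subgroup.closure s = ⊤) :
    Nonempty (Subgroup.closure (φ '' s) ≃* G) := by
  rw [← MonoidHom.map_closure, hs]
  exact ⟨(Subgroup.topEquiv.symm.trans (Subgroup.equivMapOfInjective ⊤ φ hφ)).symm⟩

variable [MulAction G X]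

variable (G) in
/-- The permutation representation of a group `G` acting on `X`, written on the labels of a
labelling `e : α ≃ X` of the points. -/
def permHomOfLabelling (e : α ≃ X) : G →* Equiv.Perm α :=
  e.symm.permCongrHom.toMonoidHom.comp (MulAction.toPermHom G X)

lemma permHomOfLabelling_injective [FaithfulSMul G X] (e : α ≃ X) :
    Function.Injective (permHomOfLabelling G e) :=
  e.symm.permCongrHom.injective.comp MulAction.toPerm_injective

lemma permHomOfLabelling_eq_of_smul_eq {e : α ≃ X} {g : G} {σ : Equiv.Perm α}
    (h : ∀ i, g • e i = e (σ i)) : permHomOfLabelling G e g = σ := by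
  ext i
  exact e.symm_apply_eq.2 (h i)

end PermutationRepresentation

section ProjectiveAction

variable {ι : Type*} [Fintype ι] [DecidableEq ι]

lemma center_specialLinearGroup_eq_bot {R : Type*} [CommRing R] [IsReduced R] (p : ℕ) {k : ℕ}
    [ExpChar R p] (hι : Fintype.card ι = p ^ k) :
    Subgroup.center (SpecialLinearGroup ι R) = ⊥ := by
  refine (Subgroup.eq_bot_iff_forall _).2 fun A hA ↦ ?_
  obtain ⟨r, hr, hrA⟩ := mem_center_iff.1 hA
  have hr1 : r = 1 := by
    rwa [hι, ← mul_one (p ^ k), ExpChar.pow_prime_pow_mul_eq_one_iff, pow_one] at hr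
  ext i j
  rw [← hrA, hr1, map_one, coe_one]

lemma faithfulSMul_projectivization_of_center_eq_bot {K : Type*} [Field K]
    (h : Subgroup.center (SpecialLinearGroup ι K) = ⊥) :
    FaithfulSMul (SpecialLinearGroup ι K) (ℙ K (ι → K)) := by
  have hker := SL_mulAction_ker (K := K) (ι := ι)
  rw [h, MonoidHom.ker_eq_bot_iff] at hker
  exact ⟨fun hg ↦ hker (Equiv.ext hg)⟩

lemma projectiveLine_mk_eq_mk_iff {K : Type*} [Field K] {v w : Fin 2 → K} (hv : v ≠ 0)
    (hw : w ≠ 0) : mk K v hv = mk K w hw ↔ v 0 * w 1 = v 1 * w 0 := by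
  rw [mk_eq_mk_iff']
  constructor
  · rintro ⟨c, rfl⟩
    simp only [Pi.smul_apply, smul_eq_mul]
    ring
  · intro h
    obtain ⟨i, hi⟩ := Function.ne_iff.1 hw
    refine ⟨v i / w i, funext fun j ↦ ?_⟩
    rw [Pi.smul_apply, smul_eq_mul, div_mul_eq_mul_div, div_eq_iff hi]
    fin_cases i <;> fin_cases j <;> grind

lemma smul_projectiveLine_mk_eq_mk_iff {K : Type*} [Field K] {g : SL(2, K)} {v w : Fin 2 → K}
    (hv : v ≠ 0) (hw : w ≠ 0) :
    g • mk K v hv = mk K w hw ↔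
      (g 0 0 * v 0 + g 0 1 * v 1) * w 1 = (g 1 0 * v 0 + g 1 1 * v 1) * w 0 := by
  rw [smul_mk, projectiveLine_mk_eq_mk_iff, Matrix.SpecialLinearGroup.smul_def, smul_eq_mulVec,
    mulVec_eq_sum]
  simp [Fin.sum_univ_two, mul_comm]

end ProjectiveAction

section UnipotentParameters

variable {R : Type*} [CommRing R]

lemma coe_transvection_zero_one (x : R) :
    (transvection zero_ne_one x : SL(2, R)) = !![1, x; 0, 1] := by
  ext i j
  fin_cases i <;> fin_cases j <;> simp [transvection_coe]

lemma coe_transvection_one_zero (x : R) :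
    (transvection one_ne_zero x : SL(2, R)) = !![1, 0; x, 1] := by
  ext i j
  fin_cases i <;> fin_cases j <;> simp [transvection_coe]

/-- The additive group of those `x` for which the translation `!![1, x; 0, 1]` lies in `H`. -/
def unipotentParameters (H : Subgroup SL(2, R)) : AddSubgroup R where
  carrier := {x | transvection zero_ne_one x ∈ H}
  zero_mem' := by simp
  add_mem' {x y} hx hy := by
    change transvection _ (x + y) ∈ H
    rw [transvection_add]
    exact mul_mem hx hy
  neg_mem' {x} hx := by
    change transvection _ (-x) ∈ H
    rw [← transvection_inv]
    exact inv_mem hx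

lemma mem_unipotentParameters {H : Subgroup SL(2, R)} {x : R} :
    x ∈ unipotentParameters H ↔ transvection zero_ne_one x ∈ H :=
  Iff.rfl

lemma sq_mul_mem_unipotentParameters {H : Subgroup SL(2, R)} {g : SL(2, R)} (hg : g ∈ H)
    (hg10 : g 1 0 = 0) {x : R} (hx : x ∈ unipotentParameters H) :
    g 0 0 ^ 2 * x ∈ unipotentParameters H := by
  have hdet : g 0 0 * g 1 1 = 1 := by
    simpa only [det_fin_two, hg10, mul_zero, sub_zero] using g.2
  have hconj : transvection zero_ne_one (g 0 0 ^ 2 * x) =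
      g * transvection zero_ne_one x * g⁻¹ := by
    set p := g 0 0
    rw [eq_mul_inv_iff_mul_eq]
    apply Subtype.ext
    rw [coe_mul, coe_mul, coe_transvection_zero_one, coe_transvection_zero_one,
      eta_fin_two (g : Matrix _ _ R), hg10, mul_fin_two, mul_fin_two]
    congrm !![?_, ?_; ?_, ?_] <;> grind
  rw [mem_unipotentParameters, hconj]
  exact mul_mem (mul_mem hg hx) (inv_mem hg)

end UnipotentParameters

section Generation

variable {K : Type*} [Field K]

lemma transvection_one_zero_eq_conj {w : SL(2, K)} (h00 : w 0 0 = 0) (h11 : w 1 1 = 0) (y : K) :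
    transvection one_ne_zero y =
      w * transvection zero_ne_one (-(y / w 1 0 ^ 2)) * w⁻¹ := by
  have hdet : -(w 0 1 * w 1 0) = 1 := by
    simpa only [det_fin_two, h00, zero_mul, zero_sub] using w.2
  have h10 : w 1 0 ≠ 0 := by grind
  set c := w 1 0
  rw [eq_mul_inv_iff_mul_eq]
  apply Subtype.ext
  rw [coe_mul, coe_mul, coe_transvection_zero_one, coe_transvection_one_zero,
    eta_fin_two (w : Matrix _ _ K), h00, h11, mul_fin_two, mul_fin_two]
  congrm !![?_, ?_; ?_, ?_] <;> grind

variable {H : Subgroup SL(2, K)} {g : SL(2, K)}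

lemma exists_mem_antidiagonal (hupper : ∀ x : K, transvection zero_ne_one x ∈ H) (hg : g ∈ H)
    (hg10 : g 1 0 ≠ 0) : ∃ w ∈ H, w 0 0 = 0 ∧ w 1 1 = 0 := by
  refine ⟨transvection zero_ne_one (-(g 0 0 / g 1 0)) * g *
    transvection zero_ne_one (-(g 1 1 / g 1 0)),
    mul_mem (mul_mem (hupper _) hg) (hupper _), ?_⟩
  rw [coe_mul, coe_mul, coe_transvection_zero_one, coe_transvection_zero_one,
    eta_fin_two (g : Matrix _ _ K), mul_fin_two, mul_fin_two]
  simp [hg10, mul_div_cancel₀]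

theorem eq_top_of_forall_transvection_mem (hupper : ∀ x : K, transvection zero_ne_one x ∈ H)
    (hg : g ∈ H) (hg10 : g 1 0 ≠ 0) : H = ⊤ := by
  obtain ⟨w, hw, h00, h11⟩ := exists_mem_antidiagonal hupper hg hg10
  have hlower (y : K) : transvection one_ne_zero y ∈ H := by
    rw [transvection_one_zero_eq_conj h00 h11]
    exact mul_mem (mul_mem hw (hupper _)) (inv_mem hw)
  refine eq_top_iff.2 fun A _ ↦ SL2.transvection_induction (· ∈ H) (fun i j hij x ↦ ?_)
    (fun _ _ ↦ mul_mem) A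
  fin_cases i <;> fin_cases j
  exacts [absurd rfl hij, hupper x, hlower x, absurd rfl hij]

end Generation

section FieldWithEightElements

variable {K : Type*} [Field K]

lemma charP_two_of_card_eq_eight (hK : Nat.card K = 8) : CharP K 2 := by
  have : Fintype K := @Fintype.ofFinite K (Nat.finite_of_card_ne_zero (by simp [hK]))
  exact charP_of_card_eq_prime_pow (f := 3) (by rw [← Nat.card_eq_fintype_card, hK]; rfl)

lemma exists_pow_three_add_self_add_one_eq_zero [CharP K 2] (hK : Nat.card K = 8) :
    ∃ a : K, a ^ 3 + a + 1 = 0 := by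
  have : Finite K := Nat.finite_of_card_ne_zero (by simp [hK])
  have hunits : Nat.card Kˣ = 7 := by rw [Nat.card_units, hK]
  have : Nontrivial Kˣ := Finite.one_lt_card_iff_nontrivial.1 (by rw [hunits]; norm_num)
  obtain ⟨x, hx⟩ := exists_ne (1 : Kˣ)
  have hx1 : (x : K) - 1 ≠ 0 := sub_ne_zero.2 (Units.val_eq_one.not.2 hx)
  have hx7 : (x : K) ^ 7 = 1 := by
    rw [← Units.val_pow_eq_pow_val, ← hunits, pow_card_eq_one', Units.val_one]
  -- In characteristic 2 this is the factorization of `X ^ 7 - 1`; the two cubics are reciprocal.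
  have hfactor : ((x : K) - 1) * ((x ^ 3 + x + 1) * (x ^ 3 + x ^ 2 + 1)) = 0 := by grind
  rcases mul_eq_zero.1 ((mul_eq_zero_iff_left hx1).1 hfactor) with hroot | hroot
  · exact ⟨x, hroot⟩
  · refine ⟨(x : K)⁻¹, ?_⟩
    have := x.ne_zero
    grind

variable {a : K}

/-- Homogeneous coordinates of the nine points of the projective line over the field with eight
elements, in terms of a root `a` of `X ^ 3 + X + 1`. The labels are those of the permutations in
the main theorem, the label `9` being the element `0` of `Fin 9`; the point `∞` is `![1, 0]`. -/
def pointCoordinates (a : K) : Fin 9 → Fin 2 → K :=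
  ![![a + 1, 1], ![1, 0], ![0, 1], ![a ^ 2 + 1, 1], ![a ^ 2 + a + 1, 1], ![1, 1], ![a, 1],
    ![a ^ 2, 1], ![a ^ 2 + a, 1]]

lemma pointCoordinates_ne_zero (a : K) (i : Fin 9) : pointCoordinates a i ≠ 0 := by
  fin_cases i <;> simp [pointCoordinates]

/-- The point of the projective line with a given label, see `pointCoordinates`. -/
def labelledPoint (a : K) (i : Fin 9) : ℙ K (Fin 2 → K) :=
  mk K (pointCoordinates a i) (pointCoordinates_ne_zero a i)

variable [CharP K 2]

lemma labelledPoint_injective (ha : a ^ 3 + a + 1 = 0) :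
    Function.Injective (labelledPoint a) := by
  intro i j hij
  rw [labelledPoint, labelledPoint, projectiveLine_mk_eq_mk_iff] at hij
  fin_cases i <;> fin_cases j <;>
    simp only [pointCoordinates, Fin.reduceFinMk, cons_val] at hij <;>
    grind

lemma labelledPoint_bijective (ha : a ^ 3 + a + 1 = 0) (hK : Nat.card K = 8) :
    Function.Bijective (labelledPoint a) := by
  have : Finite K := Nat.finite_of_card_ne_zero (by simp [hK])
  refine (labelledPoint_injective ha).bijective_of_nat_card_le ?_
  rw [card_of_finrank_two K _ (by simp), hK, Nat.card_fin]

lemma addSubgroup_eq_top_of_mul_mem (ha : a ^ 3 + a + 1 = 0) (hK : Nat.card K = 8)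
    {A : AddSubgroup K} (hone : 1 ∈ A) (hmul : ∀ x ∈ A, a * x ∈ A) : A = ⊤ := by
  have hself : a ∈ A := mul_one a ▸ hmul 1 hone
  have hsq : a ^ 2 ∈ A := sq a ▸ hmul a hself
  refine (AddSubgroup.eq_top_iff' A).2 fun x ↦ ?_
  obtain ⟨i, hi⟩ := (labelledPoint_bijective ha hK).surjective (mk K ![x, 1] (by simp))
  rw [labelledPoint, projectiveLine_mk_eq_mk_iff] at hi
  fin_cases i <;>
    simp only [pointCoordinates, Fin.reduceFinMk, cons_val, mul_one, one_mul, zero_mul, one_ne_zero]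
      at hi <;>
    subst hi
  exacts [add_mem hself hone, zero_mem A, add_mem hsq hone, add_mem (add_mem hsq hself) hone,
    hone, hself, hsq, add_mem hsq hself]

/-- The Möbius transformation `x ↦ a ^ 2 / (x + a)`, rescaled by `a⁻¹ = a ^ 2 + 1` to
determinant 1. -/
def generatorR (ha : a ^ 3 + a + 1 = 0) : SL(2, K) :=
  ⟨!![0, a; a ^ 2 + 1, 1], by rw [det_fin_two_of]; grind⟩

lemma coe_generatorR (ha : a ^ 3 + a + 1 = 0) :
    (generatorR ha : Matrix (Fin 2) (Fin 2) K) = !![0, a; a ^ 2 + 1, 1] :=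
  rfl

lemma transvection_smul_labelledPoint (i : Fin 9) :
    (transvection zero_ne_one 1 : SL(2, K)) • labelledPoint a i =
      labelledPoint a ((c[2, 5] * c[3, 7] * c[4, 8] * c[6, 9] : Equiv.Perm (Fin 9)) i) := by
  have hσ : ⇑(c[2, 5] * c[3, 7] * c[4, 8] * c[6, 9] : Equiv.Perm (Fin 9)) =
      ![6, 1, 5, 7, 8, 2, 0, 3, 4] := by decide
  rw [hσ, labelledPoint, labelledPoint, smul_projectiveLine_mk_eq_mk_iff,
    coe_transvection_zero_one]
  fin_cases i <;>
    simp only [pointCoordinates, Fin.reduceFinMk, of_apply, cons_val', cons_val] <;>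
    grind

lemma generatorR_smul_labelledPoint (ha : a ^ 3 + a + 1 = 0) (i : Fin 9) :
    generatorR ha • labelledPoint a i =
      labelledPoint a ((c[1, 2, 6] * c[3, 8, 5] * c[4, 9, 7] : Equiv.Perm (Fin 9)) i) := by
  have hσ : ⇑(c[1, 2, 6] * c[3, 8, 5] * c[4, 9, 7] : Equiv.Perm (Fin 9)) =
      ![7, 2, 6, 8, 0, 3, 1, 4, 5] := by decide
  rw [hσ, labelledPoint, labelledPoint, smul_projectiveLine_mk_eq_mk_iff, coe_generatorR]
  fin_cases i <;>
    simp only [pointCoordinates, Fin.reduceFinMk, of_apply, cons_val', cons_val] <;>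
    grind

-- The word sends `∞ ↦ 0 ↦ 1 ↦ a ^ 2 + a ↦ a ^ 2 + a + 1 ↦ a + 1 ↦ a ↦ ∞`.
lemma coe_word_fixing_infinity (ha : a ^ 3 + a + 1 = 0) :
    let S : SL(2, K) := transvection zero_ne_one 1
    let R : SL(2, K) := generatorR ha
    (R * S * R * S * R⁻¹ * S * R : SL(2, K)) = !![a ^ 2 + a, a ^ 2 + a; 0, a + 1] := by
  simp only [coe_mul, coe_inv, coe_transvection_zero_one, coe_generatorR, adjugate_fin_two_of,
    mul_fin_two]
  congrm !![?_, ?_; ?_, ?_] <;> grind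

theorem closure_transvection_generatorR_eq_top (ha : a ^ 3 + a + 1 = 0) (hK : Nat.card K = 8) :
    Subgroup.closure {(transvection zero_ne_one 1 : SL(2, K)), generatorR ha} = ⊤ := by
  set S : SL(2, K) := transvection zero_ne_one 1
  set R : SL(2, K) := generatorR ha with hR_def
  set H := Subgroup.closure {S, R}
  have hS : S ∈ H := Subgroup.subset_closure (by simp)
  have hR : R ∈ H := Subgroup.subset_closure (by simp)
  have hword : R * S * R * S * R⁻¹ * S * R ∈ H := by
    apply_rules [mul_mem, inv_mem]
  have hcoe : (R * S * R * S * R⁻¹ * S * R : SL(2, K)) = !![a ^ 2 + a, a ^ 2 + a; 0, a + 1] :=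
    coe_word_fixing_infinity ha
  have hstable (x : K) (hx : x ∈ unipotentParameters H) : a * x ∈ unipotentParameters H := by
    have hsq : (a ^ 2 + a) ^ 2 = a := by grind
    have := sq_mul_mem_unipotentParameters hword (by rw [hcoe]; rfl) hx
    rw [hcoe] at this
    simpa [hsq] using this
  have htop : unipotentParameters H = ⊤ := addSubgroup_eq_top_of_mul_mem ha hK hS hstable
  have hR10 : R 1 0 ≠ 0 := by
    rw [hR_def, coe_generatorR]
    change a ^ 2 + 1 ≠ 0
    grind
  exact eq_top_of_forall_transvection_mem
    (fun x ↦ mem_unipotentParameters.1 (htop ▸ AddSubgroup.mem_top x)) hR hR10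

end FieldWithEightElements

theorem monodromy_group_is_SL2_F8_general {K : Type*} [Field K] (hK : Nat.card K = 8) :
    let σS : Equiv.Perm (Fin 9) := c[2, 5] * c[3, 7] * c[4, 8] * c[6, 9]
    let σR : Equiv.Perm (Fin 9) := c[1, 2, 6] * c[3, 8, 5] * c[4, 9, 7]
    Nonempty (Subgroup.closure {σS, σR} ≃* SpecialLinearGroup (Fin 2) K) := by
  intro σS σR
  have : CharP K 2 := charP_two_of_card_eq_eight hK
  obtain ⟨a, ha⟩ := exists_pow_three_add_self_add_one_eq_zero hK
  have : FaithfulSMul SL(2, K) (ℙ K (Fin 2 → K)) :=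
    faithfulSMul_projectivization_of_center_eq_bot
      (center_specialLinearGroup_eq_bot 2 (k := 1) (Fintype.card_fin 2))
  let φ := permHomOfLabelling SL(2, K) (Equiv.ofBijective _ (labelledPoint_bijective ha hK))
  have hS : φ (transvection zero_ne_one 1) = σS :=
    permHomOfLabelling_eq_of_smul_eq transvection_smul_labelledPoint
  have hR : φ (generatorR ha) = σR :=
    permHomOfLabelling_eq_of_smul_eq (generatorR_smul_labelledPoint ha)
  rw [← hS, ← hR, ← Set.image_pair]
  exact nonempty_closure_image_mulEquiv (permHomOfLabelling_injective _)
    (closure_transvection_generatorR_eq_top ha hK)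

/-- The subgroup of `S₉` generated by `σ_S = (2 5)(3 7)(4 8)(6 9)` and
`σ_R = (1 2 6)(3 8 5)(4 9 7)` is isomorphic to `SL(2, F₈)`, the group of 2×2 matrices
of determinant 1 over the field with 8 elements. (In `Equiv.Perm (Fin 9)` the numeral
`9` denotes the element `0` of `Fin 9`, so the labels `1,…,9` exhaust `Fin 9`.) -/
theorem monodromy_group_is_SL2_F8 :
    let σS : Equiv.Perm (Fin 9) := c[2, 5] * c[3, 7] * c[4, 8] * c[6, 9]
    let σR : Equiv.Perm (Fin 9) := c[1, 2, 6] * c[3, 8, 5] * c[4, 9, 7]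
    Nonempty ((Subgroup.closure {σS, σR} : Subgroup (Equiv.Perm (Fin 9))) ≃*
      Matrix.SpecialLinearGroup (Fin 2) (GaloisField 2 3)) :=
  monodromy_group_is_SL2_F8_general (GaloisField.card 2 3 three_ne_zero)
end

section
/- Let σ_S = (1 15)(2 12)(3 7)(4 9)(5 13)(6 10)(8 14) and σ_R = (1 11 12)(2 13 6)(3 8 15)(4 10 7)(5 14 9) be permutations of {1,…,15}. Then the subgroup of S₁₅ generated by σ_S and σ_R has order 9720 (the order of the group (C₃ × C₃ × C₃ × C₃) : (C₂ × A₅)). -/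
/-!
Under a suitable identification of the points with `Fin 5 × ZMod 3`, both generators have the form
`(i, a) ↦ (π i, s * a + v (π i))` with `π` even, `s = ±1` and `∑ i, v i = 0`. All permutations of
this form make up a group of order `60 * 2 * 3 ^ 4`.

Conversely, `(σS * σR) ^ 5` is the inversion `(i, a) ↦ (i, -a)`. Its commutator with an element
`(π, s, v)` of the generated group is the translation by `2 • v = -v`, so the group contains each
of the factors `π`, `s` and `v` separately. By Jordan's theorem the block permutations of the
generators generate the alternating group: their product is a `5`-cycle and one of them is a
`3`-cycle. The translations form a submodule of `Fin 5 → ZMod 3` which is stable under the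
alternating group and contains the difference of two basis vectors; by double transitivity it
contains all such differences, hence every vector of coordinate sum zero.
-/

open Equiv MulAction

theorem permCongrHom_eq_iff {α β : Type*} {e : α ≃ β} {f : Perm α} {g : Perm β} :
    e.permCongrHom f = g ↔ ∀ a, e (f a) = g (e a) := by
  simp [Equiv.ext_iff, ← e.forall_congr_right]

theorem isMultiplyPretransitive_two_alternatingGroup {α : Type*} [Fintype α] [DecidableEq α]
    (hα : 4 ≤ Nat.card α) : IsMultiplyPretransitive (alternatingGroup α) α 2 :=
  have := alternatingGroup.isMultiplyPretransitive α
  isMultiplyPretransitive_of_le (n := Nat.card α - 2) (by lia) (Nat.sub_le _ _)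

section SumZero

variable (ι R : Type*) [Fintype ι] [Ring R]

/-- The submodule of `ι → R` of the vectors with coordinate sum zero (the deleted permutation
module of `ι`). -/
def sumZero : Submodule R (ι → R) := LinearMap.ker (∑ i, LinearMap.proj i)

variable {ι R}

theorem mem_sumZero {v : ι → R} : v ∈ sumZero ι R ↔ ∑ i, v i = 0 := by
  simp [sumZero]

theorem comp_perm_mem_sumZero (π : Perm ι) {v : ι → R} (hv : v ∈ sumZero ι R) :
    v ∘ π ∈ sumZero ι R := by
  rw [mem_sumZero] at hv ⊢
  exact (Equiv.sum_comp π v).trans hv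

theorem card_sumZero_mul_card [Nonempty ι] :
    Nat.card (sumZero ι R) * Nat.card R = Nat.card R ^ Nat.card ι := by
  classical
  let total : (ι → R) →ₗ[R] R := ∑ i, LinearMap.proj i
  have total_surjective : Function.Surjective total := fun r ↦
    ⟨Pi.single (Classical.arbitrary ι) r, by simp [total]⟩
  calc Nat.card (sumZero ι R) * Nat.card R
      = Nat.card total.toAddMonoidHom.ker * total.toAddMonoidHom.ker.index := by
        rw [AddSubgroup.index_ker, AddMonoidHom.range_eq_top.2 total_surjective,
          AddSubgroup.card_top]
        rfl
    _ = Nat.card R ^ Nat.card ι := by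
        rw [AddSubgroup.card_mul_index, Nat.card_fun]

variable [DecidableEq ι]

theorem sumZero_le_of_single_sub_single_mem {W : Submodule R (ι → R)}
    (h : ∀ i j, Pi.single i 1 - Pi.single j 1 ∈ W) : sumZero ι R ≤ W := by
  intro v hv
  rw [mem_sumZero] at hv
  rcases isEmpty_or_nonempty ι with _ | ⟨⟨j⟩⟩
  · exact Subsingleton.elim 0 v ▸ W.zero_mem
  have hsum : v = ∑ i, v i • (Pi.single i 1 - Pi.single j 1 : ι → R) := by
    simp only [smul_sub, Finset.sum_sub_distrib, ← Finset.sum_smul, hv, zero_smul, sub_zero]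
    exact pi_eq_sum_univ' v
  rw [hsum]
  exact W.sum_mem fun i _ ↦ W.smul_mem _ (h i j)

theorem sumZero_le_of_isMultiplyPretransitive {W : Submodule R (ι → R)} (A : Subgroup (Perm ι))
    [IsMultiplyPretransitive A ι 2] (hW : ∀ π ∈ A, ∀ v ∈ W, v ∘ ⇑π⁻¹ ∈ W) {i j : ι} (hij : i ≠ j)
    (h : Pi.single i 1 - Pi.single j 1 ∈ W) : sumZero ι R ≤ W := by
  refine sumZero_le_of_single_sub_single_mem fun k l ↦ ?_
  rcases eq_or_ne k l with rfl | hkl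
  · simp
  obtain ⟨⟨π, hπ⟩, rfl, rfl⟩ := is_two_pretransitive_iff.1 ‹_› hij hkl
  convert hW π hπ _ h using 1
  ext m
  simp [Pi.single_apply, symm_apply_eq, Subgroup.smul_def]

end SumZero

section BlockAffine

variable {ι R : Type*} [Ring R]

/-- The permutation `(i, a) ↦ (π i, s * a + v (π i))` of the union of the blocks `{i} × R`: it
permutes the blocks by `π` and acts affinely, with common slope `s`, between them. The vector `v`
is indexed by the target block, so that the translation is applied last. -/
def blockAffine (π : Perm ι) (s : Rˣ) (v : ι → R) : Perm (ι × R) :=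
  π.prodShear fun i ↦ s.mulLeft.trans (Equiv.addRight (v (π i)))

theorem blockAffine_apply (π : Perm ι) (s : Rˣ) (v : ι → R) (p : ι × R) :
    blockAffine π s v p = (π p.1, s * p.2 + v (π p.1)) := rfl

theorem blockAffine_one : blockAffine (1 : Perm ι) (1 : Rˣ) 0 = 1 := by
  ext p : 1
  simp [blockAffine_apply]

theorem blockAffine_mul (π π' : Perm ι) (s s' : Rˣ) (v v' : ι → R) :
    blockAffine π s v * blockAffine π' s' v' =
      blockAffine (π * π') (s * s') (s • (v' ∘ ⇑π⁻¹) + v) := by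
  ext p : 1
  simp only [Perm.mul_apply, blockAffine_apply, Pi.add_apply, Pi.smul_apply, Function.comp_apply,
    Perm.coe_inv, symm_apply_apply, Units.val_mul, Units.smul_def, smul_eq_mul,
    mul_add, mul_assoc, add_assoc]

theorem blockAffine_inv (π : Perm ι) (s : Rˣ) (v : ι → R) :
    (blockAffine π s v)⁻¹ = blockAffine π⁻¹ s⁻¹ (-(s⁻¹ • (v ∘ π))) := by
  rw [inv_eq_iff_mul_eq_one, blockAffine_mul, ← blockAffine_one]
  congr 1
  · simp
  · simp
  · ext i
    simp

theorem blockAffine_injective [Nonempty ι] :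
    Function.Injective fun x : Perm ι × Rˣ × (ι → R) ↦ blockAffine x.1 x.2.1 x.2.2 := by
  rintro ⟨π, s, v⟩ ⟨π', s', v'⟩ h
  have happly (p : ι × R) : blockAffine π s v p = blockAffine π' s' v' p := DFunLike.congr_fun h p
  simp only [blockAffine_apply, Prod.mk.injEq] at happly
  obtain rfl : π = π' := Equiv.ext fun i ↦ (happly (i, 0)).1
  obtain rfl : v = v' := funext fun i ↦ by simpa using (happly (π⁻¹ i, 0)).2
  obtain rfl : s = s' := Units.ext <| by simpa using (happly (Classical.arbitrary ι, 1)).2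
  rfl

theorem blockAffine_eq_translation_mul (π : Perm ι) (s : Rˣ) (v : ι → R) :
    blockAffine π s v = blockAffine 1 1 v * (blockAffine π 1 0 * blockAffine 1 s 0) := by
  simp [blockAffine_mul]

theorem translation_add_self_mul_inversion_mul (π : Perm ι) (s : Rˣ) (v : ι → R) :
    blockAffine 1 1 (v + v) * (blockAffine 1 (-1) 0 * blockAffine π s v) =
      blockAffine π s v * blockAffine 1 (-1) 0 := by
  simp [blockAffine_mul]

variable [Fintype ι]

/-- The group of the permutations `blockAffine π s v` of `ι × R` with `π ∈ A` and `v` of coordinate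
sum zero, that is, the semidirect product of `sumZero ι R` by `A × Rˣ`. -/
def sumZeroAffineGroup (R : Type*) [Ring R] (A : Subgroup (Perm ι)) :
    Subgroup (Perm (ι × R)) where
  carrier := {g | ∃ π ∈ A, ∃ s : Rˣ, ∃ v ∈ sumZero ι R, blockAffine π s v = g}
  one_mem' := ⟨1, one_mem _, 1, 0, zero_mem _, blockAffine_one⟩
  mul_mem' := by
    rintro _ _ ⟨π, hπ, s, v, hv, rfl⟩ ⟨π', hπ', s', v', hv', rfl⟩
    exact ⟨π * π', mul_mem hπ hπ', s * s', _,
      add_mem (Submodule.smul_mem _ (s : R) (comp_perm_mem_sumZero π⁻¹ hv')) hv,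
      (blockAffine_mul ..).symm⟩
  inv_mem' := by
    rintro _ ⟨π, hπ, s, v, hv, rfl⟩
    exact ⟨π⁻¹, inv_mem hπ, s⁻¹, _,
      neg_mem (Submodule.smul_mem _ (↑s⁻¹ : R) (comp_perm_mem_sumZero π hv)),
      (blockAffine_inv ..).symm⟩

theorem card_sumZeroAffineGroup [Nonempty ι] (A : Subgroup (Perm ι)) :
    Nat.card (sumZeroAffineGroup R A) = Nat.card A * (Nat.card Rˣ * Nat.card (sumZero ι R)) := by
  let parametrization : A × Rˣ × sumZero ι R → sumZeroAffineGroup R A :=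
    fun x ↦ ⟨blockAffine x.1 x.2.1 x.2.2, x.1, x.1.2, x.2.1, x.2.2, x.2.2.2, rfl⟩
  have hbij : Function.Bijective parametrization := by
    constructor
    · rintro ⟨π, s, v⟩ ⟨π', s', v'⟩ h
      have hparts : ((π : Perm ι), s, (v : ι → R)) = (↑π', s', ↑v') :=
        blockAffine_injective (congrArg Subtype.val h)
      simp only [Prod.mk.injEq, SetLike.coe_eq_coe] at hparts ⊢
      exact hparts
    · rintro ⟨_, π, hπ, s, v, hv, rfl⟩
      exact ⟨⟨⟨π, hπ⟩, s, ⟨v, hv⟩⟩, rfl⟩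
  rw [← Nat.card_congr (Equiv.ofBijective _ hbij), Nat.card_prod, Nat.card_prod]

end BlockAffine

section Containment

variable {ι R : Type*} [Ring R]

variable (ι R) in
/-- The action of `Perm ι` on `ι × R` through the block index. -/
def permuteBlocks : Perm ι →* Perm (ι × R) where
  toFun π := blockAffine π 1 0
  map_one' := blockAffine_one
  map_mul' π π' := by simp [blockAffine_mul]

/-- The vectors `v` whose translation `(i, a) ↦ (i, a + v i)` belongs to `G`. -/
def translationSubgroup (G : Subgroup (Perm (ι × R))) : AddSubgroup (ι → R) where
  carrier := {v | blockAffine 1 1 v ∈ G}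
  zero_mem' := by simp [blockAffine_one]
  add_mem' {v w} hv hw := by
    have h := G.mul_mem hw hv
    rw [blockAffine_mul] at h
    simpa using h
  neg_mem' {v} hv := by
    have h := G.inv_mem hv
    rw [blockAffine_inv] at h
    simpa using h

theorem mem_translationSubgroup {G : Subgroup (Perm (ι × R))} {v : ι → R} :
    v ∈ translationSubgroup G ↔ blockAffine 1 1 v ∈ G := Iff.rfl

theorem comp_inv_mem_translationSubgroup {G : Subgroup (Perm (ι × R))} {π : Perm ι}
    (hπ : permuteBlocks ι R π ∈ G) {v : ι → R} (hv : v ∈ translationSubgroup G) :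
    v ∘ ⇑π⁻¹ ∈ translationSubgroup G := by
  have hconj : blockAffine 1 1 (v ∘ ⇑π⁻¹) =
      permuteBlocks ι R π * blockAffine 1 1 v * (permuteBlocks ι R π)⁻¹ := by
    simp [permuteBlocks, blockAffine_mul, blockAffine_inv]
  rw [mem_translationSubgroup, hconj]
  exact mul_mem (mul_mem hπ hv) (inv_mem hπ)

theorem sumZeroAffineGroup_le [Fintype ι] [DecidableEq ι] {n : ℕ}
    {G : Subgroup (Perm (ι × ZMod n))} {A : Subgroup (Perm ι)} [IsMultiplyPretransitive A ι 2]
    (hA : A ≤ G.comap (permuteBlocks ι (ZMod n))) (hscale : ∀ s, blockAffine 1 s 0 ∈ G)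
    {i j : ι} (hij : i ≠ j) (h : Pi.single i 1 - Pi.single j 1 ∈ translationSubgroup G) :
    sumZeroAffineGroup (ZMod n) A ≤ G := by
  have htranslation :
      sumZero ι (ZMod n) ≤ AddSubgroup.toZModSubmodule n (translationSubgroup G) :=
    sumZero_le_of_isMultiplyPretransitive A
      (fun _ hπ _ ↦ comp_inv_mem_translationSubgroup (hA hπ)) hij h
  rintro _ ⟨π, hπ, s, v, hv, rfl⟩
  rw [blockAffine_eq_translation_mul]
  exact mul_mem (htranslation hv) (mul_mem (hA hπ) (hscale s))

variable {G : Subgroup (Perm (ι × ZMod 3))}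

theorem scaling_mem_of_inversion_mem (hneg : blockAffine 1 (-1) 0 ∈ G) (s : (ZMod 3)ˣ) :
    blockAffine 1 s 0 ∈ G := by
  have hs : ∀ s : (ZMod 3)ˣ, s = 1 ∨ s = -1 := by decide
  rcases hs s with rfl | rfl
  · rw [blockAffine_one]
    exact one_mem G
  · exact hneg

theorem mem_translationSubgroup_of_inversion_mem (hneg : blockAffine 1 (-1) 0 ∈ G) {π : Perm ι}
    {s : (ZMod 3)ˣ} {v : ι → ZMod 3} (h : blockAffine π s v ∈ G) :
    v ∈ translationSubgroup G := by
  have hdouble : v + v ∈ translationSubgroup G := by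
    rw [mem_translationSubgroup,
      eq_mul_inv_of_mul_eq (translation_add_self_mul_inversion_mul π s v)]
    exact mul_mem (mul_mem h hneg) (inv_mem (mul_mem hneg h))
  have hthree : ∀ a : ZMod 3, a = -(a + a) := by decide
  rw [show v = -(v + v) from funext fun i ↦ hthree (v i)]
  exact neg_mem hdouble

theorem permuteBlocks_mem_of_inversion_mem (hneg : blockAffine 1 (-1) 0 ∈ G) {π : Perm ι}
    {s : (ZMod 3)ˣ} {v : ι → ZMod 3} (h : blockAffine π s v ∈ G) :
    permuteBlocks ι (ZMod 3) π ∈ G := by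
  have hv := mem_translationSubgroup.1 (mem_translationSubgroup_of_inversion_mem hneg h)
  rwa [blockAffine_eq_translation_mul, mul_mem_cancel_left hv,
    mul_mem_cancel_right (scaling_mem_of_inversion_mem hneg s)] at h

end Containment

section Generators

theorem alternatingGroup_le_closure_blockPerms :
    alternatingGroup (Fin 5) ≤ Subgroup.closure {c[0, 1] * c[2, 4], c[1, 3, 4]} := by
  set P : Subgroup (Perm (Fin 5)) := Subgroup.closure {c[0, 1] * c[2, 4], c[1, 3, 4]}
  have hS : c[0, 1] * c[2, 4] ∈ P := Subgroup.subset_closure (.inl rfl)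
  have hR : c[1, 3, 4] ∈ P := Subgroup.subset_closure (.inr rfl)
  let fiveCycle : P := ⟨_, mul_mem hS hR⟩
  have horbit : ∀ i : Fin 5, ∃ k : Fin 5,
      ((c[0, 1] * c[2, 4] * c[1, 3, 4] : Perm (Fin 5)) ^ (k : ℕ)) 0 = i := by
    decide +kernel
  have : IsPretransitive P (Fin 5) :=
    (isPretransitive_iff_base 0).2 fun i ↦ (horbit i).elim fun k hk ↦ ⟨fiveCycle ^ (k : ℕ), hk⟩
  have hprimitive : IsPreprimitive P (Fin 5) := .of_prime_card (by norm_num)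
  have hthree : (c[1, 3, 4] : Perm (Fin 5)).IsThreeCycle := by
    rw [← card_support_eq_three_iff]
    decide +kernel
  exact Perm.alternatingGroup_le_of_isPreprimitive_of_isThreeCycle_mem hprimitive hthree hR

/-- The translation vector shared by the two generators in the coordinates of `blockLabel`. -/
def blockVector : Fin 5 → ZMod 3 := ![1, 1, -1, 0, -1]

/-- The generator `σ_S` in the block coordinates of `blockLabel`. -/
def blockS : Perm (Fin 5 × ZMod 3) := blockAffine (c[0, 1] * c[2, 4]) (-1) blockVector

/-- The generator `σ_R` in the block coordinates of `blockLabel`. -/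
def blockR : Perm (Fin 5 × ZMod 3) := blockAffine c[1, 3, 4] 1 blockVector

theorem closure_blockS_blockR_le :
    Subgroup.closure {blockS, blockR} ≤ sumZeroAffineGroup (ZMod 3) (alternatingGroup (Fin 5)) := by
  have hsum : blockVector ∈ sumZero (Fin 5) (ZMod 3) := mem_sumZero.2 (by decide)
  rw [Subgroup.closure_le]
  rintro _ (rfl | rfl)
  · exact ⟨_, Perm.mem_alternatingGroup.2 (by decide +kernel), _, _, hsum, rfl⟩
  · exact ⟨_, Perm.mem_alternatingGroup.2 (by decide +kernel), _, _, hsum, rfl⟩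

theorem blockS_mul_blockR_pow_five : (blockS * blockR) ^ 5 = blockAffine 1 (-1) 0 :=
  Equiv.ext (by decide +kernel)

theorem le_closure_blockS_blockR :
    sumZeroAffineGroup (ZMod 3) (alternatingGroup (Fin 5)) ≤ Subgroup.closure {blockS, blockR} := by
  set G := Subgroup.closure {blockS, blockR}
  have hS : blockS ∈ G := Subgroup.subset_closure (.inl rfl)
  have hR : blockR ∈ G := Subgroup.subset_closure (.inr rfl)
  have hneg : blockAffine 1 (-1) 0 ∈ G :=
    blockS_mul_blockR_pow_five ▸ pow_mem (mul_mem hS hR) 5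
  have hA : alternatingGroup (Fin 5) ≤ G.comap (permuteBlocks (Fin 5) (ZMod 3)) := by
    refine alternatingGroup_le_closure_blockPerms.trans ((Subgroup.closure_le _).2 ?_)
    rintro _ (rfl | rfl)
    · exact permuteBlocks_mem_of_inversion_mem hneg hS
    · exact permuteBlocks_mem_of_inversion_mem hneg hR
  have hv := mem_translationSubgroup_of_inversion_mem hneg hR
  let π : Perm (Fin 5) := c[0, 1] * c[2, 3]
  have hπ : π ∈ alternatingGroup (Fin 5) := Perm.mem_alternatingGroup.2 (by decide +kernel)
  have hdiff : blockVector - blockVector ∘ ⇑π⁻¹ = Pi.single 3 1 - Pi.single 2 1 := by decide +kernel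
  have := isMultiplyPretransitive_two_alternatingGroup (α := Fin 5) (by norm_num)
  exact sumZeroAffineGroup_le hA (scaling_mem_of_inversion_mem hneg) (by decide)
    (hdiff ▸ sub_mem hv (comp_inv_mem_translationSubgroup (hA hπ) hv))

theorem card_closure_blockS_blockR : Nat.card (Subgroup.closure {blockS, blockR}) = 9720 := by
  have hA : Nat.card (alternatingGroup (Fin 5)) = 60 := by
    rw [nat_card_alternatingGroup, Nat.card_fin]
    rfl
  have hunits : Nat.card (ZMod 3)ˣ = 2 := by
    simp [Nat.card_eq_fintype_card, ZMod.card_units_eq_totient, Nat.totient_prime Nat.prime_three]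
  have hsumZero : Nat.card (sumZero (Fin 5) (ZMod 3)) = 81 := by
    have := card_sumZero_mul_card (ι := Fin 5) (R := ZMod 3)
    simp only [Nat.card_zmod, Nat.card_fin] at this
    omega
  rw [closure_blockS_blockR_le.antisymm le_closure_blockS_blockR, card_sumZeroAffineGroup, hA,
    hunits, hsumZero]

/-- The labels of the points in block coordinates: the rows of the matrix are the blocks of
imprimitivity, and the coordinates within them are chosen so that both generators act affinely and
`blockS * blockR` has no translation part. -/
noncomputable def blockLabel : Fin 5 × ZMod 3 ≃ Fin 15 :=
  Equiv.ofBijective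
    (fun p ↦ !![8, 15, 3; 1, 14, 7; 2, 6, 13; 11, 9, 4; 5, 10, 12] p.1 p.2)
    (by decide +kernel)

end Generators

/-- The subgroup of `S₁₅` generated by
`σ_S = (1 15)(2 12)(3 7)(4 9)(5 13)(6 10)(8 14)` and
`σ_R = (1 11 12)(2 13 6)(3 8 15)(4 10 7)(5 14 9)` has order `9720`, the order of
`(C₃ × C₃ × C₃ × C₃) : (C₂ × A₅)`. (In `Equiv.Perm (Fin 15)` the numeral `15` denotes
the element `0` of `Fin 15`, so the labels `1,…,15` exhaust `Fin 15`.) -/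
theorem monodromy_group_order_9720 :
    let σS : Equiv.Perm (Fin 15) :=
      c[1, 15] * c[2, 12] * c[3, 7] * c[4, 9] * c[5, 13] * c[6, 10] * c[8, 14]
    let σR : Equiv.Perm (Fin 15) :=
      c[1, 11, 12] * c[2, 13, 6] * c[3, 8, 15] * c[4, 10, 7] * c[5, 14, 9]
    Nat.card (Subgroup.closure {σS, σR} : Subgroup (Equiv.Perm (Fin 15))) = 9720 := by
  intro σS σR
  have hS : blockLabel.permCongrHom blockS = σS := permCongrHom_eq_iff.2 (by decide +kernel)
  have hR : blockLabel.permCongrHom blockR = σR := permCongrHom_eq_iff.2 (by decide +kernel)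
  have hmap : (Subgroup.closure {blockS, blockR}).map blockLabel.permCongrHom.toMonoidHom =
      Subgroup.closure {σS, σR} := by
    rw [MonoidHom.map_closure, Set.image_pair, ← hS, ← hR]
    rfl
  rw [← hmap, Subgroup.card_map_of_injective blockLabel.permCongrHom.injective,
    card_closure_blockS_blockR]
end

section
/- The polynomial p(v) = v²⁴ − 6v²³ + 21v²² − 60v²¹ + 184v²⁰ − 478v¹⁹ + 651v¹⁸ − 1220v¹⁷ + 2230v¹⁶ + 1226v¹⁵ − 947v¹⁴ + 804v¹³ − 7092v¹² − 6862v¹¹ + 3971v¹⁰ − 15340v⁹ + 7975v⁸ + 36044v⁷ + 7134v⁶ + 14896v⁵ + 13928v⁴ − 2372v³ + 3970v² − 584v + 22 is irreducible over ℚ. -/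
open Polynomial

/-!
If a primitive `f ∈ ℤ[X]` factors as `g * h` and `f(n) = m * q` with `q` prime, then `g(n)` or
`h(n)` divides `m`. But at `n` a nonconstant divisor of `f` is at least as large in absolute value
as a power of the distance from `n` to the complex roots of `f`, so `f` is irreducible as soon as
that distance exceeds `|m|` (with `m ≠ 0`). Here every root has modulus less than `10`, and
`p(-18)` is twice a prime.
-/

theorem norm_leadingCoeff_mul_pow_le_norm_eval {K : Type*} [NormedField K] {p : K[X]}
    (hp : p.Splits) {x : K} {r : ℝ} (hr : 0 ≤ r) (hroots : ∀ z ∈ p.roots, r ≤ ‖x - z‖) :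
    ‖p.leadingCoeff‖ * r ^ p.natDegree ≤ ‖p.eval x‖ := by
  calc ‖p.leadingCoeff‖ * r ^ p.natDegree
      = ‖p.leadingCoeff‖ * (p.roots.map fun _ ↦ r).prod := by
        rw [Multiset.map_const', Multiset.prod_replicate, hp.natDegree_eq_card_roots]
    _ ≤ ‖p.leadingCoeff‖ * (p.roots.map fun z ↦ ‖x - z‖).prod := by
        gcongr
        exact Multiset.prod_map_le_prod_map₀ _ _ (fun _ _ ↦ hr) hroots
    _ = ‖p.eval x‖ := by
        rw [hp.eval_eq_prod_roots, norm_mul, ← normHom_apply (Multiset.prod _), map_multiset_prod,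
          Multiset.map_map]
        simp only [Function.comp_def, normHom_apply]

theorem le_abs_eval_of_forall_root {g : ℤ[X]} (hg : g.natDegree ≠ 0) {n : ℤ} {r : ℝ} (hr : 1 ≤ r)
    (hroots : ∀ z : ℂ, aeval z g = 0 → r ≤ ‖(n : ℂ) - z‖) : r ≤ |((g.eval n : ℤ) : ℝ)| := by
  set gℂ : ℂ[X] := g.map (Int.castRingHom ℂ) with hgℂ
  have hinj : Function.Injective (Int.castRingHom ℂ) := RingHom.injective_int _
  have hdeg : gℂ.natDegree = g.natDegree := natDegree_map_eq_of_injective hinj g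
  have hlead : 1 ≤ ‖gℂ.leadingCoeff‖ := by
    rw [leadingCoeff_map_of_injective hinj, eq_intCast, Complex.norm_intCast]
    exact_mod_cast Int.one_le_abs (leadingCoeff_ne_zero.2 (ne_zero_of_natDegree_gt hg.bot_lt))
  have hroots_map : ∀ z ∈ gℂ.roots, r ≤ ‖(n : ℂ) - z‖ := fun z hz ↦
    hroots z (by rw [aeval_def, ← eval_map]; exact isRoot_of_mem_roots hz)
  calc r ≤ r ^ g.natDegree := le_self_pow₀ hr hg
    _ ≤ ‖gℂ.leadingCoeff‖ * r ^ gℂ.natDegree := by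
        rw [hdeg]
        exact le_mul_of_one_le_left (by positivity) hlead
    _ ≤ ‖gℂ.eval (n : ℂ)‖ :=
        norm_leadingCoeff_mul_pow_le_norm_eval (IsAlgClosed.splits _) (by positivity) hroots_map
    _ = |((g.eval n : ℤ) : ℝ)| := by
        rw [hgℂ, eval_intCast_map, eq_intCast, Complex.norm_intCast, Int.cast_id]

theorem isUnit_of_eval_dvd {g : ℤ[X]} (hg : g.IsPrimitive) {n m : ℤ} (hm : m ≠ 0)
    (hgm : g.eval n ∣ m) {r : ℝ} (hmr : |(m : ℝ)| < r)
    (hroots : ∀ z : ℂ, aeval z g = 0 → r ≤ ‖(n : ℂ) - z‖) : IsUnit g := by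
  suffices hdeg : g.natDegree = 0 by
    rw [eq_C_of_natDegree_eq_zero hdeg] at hg ⊢
    exact isUnit_C.2 (hg _ dvd_rfl)
  by_contra hdeg
  have hr : 1 ≤ r := hmr.le.trans' (by exact_mod_cast Int.one_le_abs hm)
  have hle : r ≤ |((g.eval n : ℤ) : ℝ)| := le_abs_eval_of_forall_root hdeg hr hroots
  have hge : |((g.eval n : ℤ) : ℝ)| ≤ |(m : ℝ)| := by
    exact_mod_cast Int.le_of_dvd (abs_pos.2 hm) ((abs_dvd_abs _ _).2 hgm)
  exact absurd (hle.trans hge) hmr.not_ge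

theorem irreducible_of_eval_eq_mul_prime {f : ℤ[X]} (hf : f.IsPrimitive) {n m : ℤ} (hm : m ≠ 0)
    {q : ℕ} (hq : q.Prime) (hfn : f.eval n = m * q) {r : ℝ} (hmr : |(m : ℝ)| < r)
    (hroots : ∀ z : ℂ, aeval z f = 0 → r ≤ ‖(n : ℂ) - z‖) : Irreducible f := by
  have hqℤ : Prime (q : ℤ) := Nat.prime_iff_prime_int.1 hq
  have hqf : (q : ℤ) ∣ f.eval n := Dvd.intro_left m hfn.symm
  refine ⟨fun hunit ↦ hqℤ.not_isUnit (isUnit_of_dvd_unit hqf (hunit.map (evalRingHom n))),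
    fun g h hgh ↦ ?_⟩
  have isUnit_cofactor {g h : ℤ[X]} (hgh : f = g * h) (hqg : (q : ℤ) ∣ g.eval n) : IsUnit h := by
    have hhf : h ∣ f := hgh ▸ dvd_mul_left h g
    have hhm : h.eval n ∣ m := by
      rw [← mul_dvd_mul_iff_right hqℤ.ne_zero, ← hfn, hgh, eval_mul, mul_comm]
      exact mul_dvd_mul_right hqg _
    exact isUnit_of_eval_dvd (isPrimitive_of_dvd hf hhf) hm hhm hmr fun z hz ↦
      hroots z (zero_dvd_iff.1 (hz ▸ map_dvd (aeval z) hhf))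
  rw [hgh, eval_mul] at hqf
  rcases hqℤ.dvd_or_dvd hqf with hqg | hqh
  · exact .inr (isUnit_cofactor hgh hqg)
  · exact .inl (isUnit_cofactor (hgh.trans (mul_comm g h)) hqh)

theorem norm_lt_of_sum_norm_coeff_mul_pow_lt {K : Type*} [NormedField K] {p : K[X]} {B : ℝ}
    (hB : 0 < B)
    (hsum : ∑ i ∈ Finset.range p.natDegree, ‖p.coeff i‖ * B ^ i
      < ‖p.leadingCoeff‖ * B ^ p.natDegree)
    {z : K} (hz : p.IsRoot z) : ‖z‖ < B := by
  by_contra! hBz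
  set d := p.natDegree with hd
  set t := ‖z‖ / B
  have hz_eq : ‖z‖ = t * B := (div_mul_cancel₀ _ hB.ne').symm
  have ht1 : 1 ≤ t := (one_le_div hB).2 hBz
  have hlead : p.leadingCoeff * z ^ d = -∑ i ∈ Finset.range d, p.coeff i * z ^ i := by
    rw [IsRoot.def, eval_eq_sum_range, Finset.sum_range_succ, ← hd] at hz
    exact eq_neg_of_add_eq_zero_right hz
  have hlt : ‖p.leadingCoeff‖ * ‖z‖ ^ d < ‖p.leadingCoeff‖ * ‖z‖ ^ d := calc
    ‖p.leadingCoeff‖ * ‖z‖ ^ d = ‖∑ i ∈ Finset.range d, p.coeff i * z ^ i‖ := by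
        rw [← norm_pow, ← norm_mul, hlead, norm_neg]
    _ ≤ ∑ i ∈ Finset.range d, ‖p.coeff i‖ * ‖z‖ ^ i := by
        simpa only [norm_mul, norm_pow] using norm_sum_le _ fun i ↦ p.coeff i * z ^ i
    _ ≤ ∑ i ∈ Finset.range d, t ^ d * (‖p.coeff i‖ * B ^ i) := by
        refine Finset.sum_le_sum fun i hi ↦ ?_
        rw [hz_eq, mul_pow, mul_left_comm]
        gcongr
        exact (Finset.mem_range.1 hi).le
    _ < t ^ d * (‖p.leadingCoeff‖ * B ^ d) := by
        rw [← Finset.mul_sum]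
        gcongr
    _ = ‖p.leadingCoeff‖ * ‖z‖ ^ d := by rw [hz_eq]; ring
  exact lt_irrefl _ hlt

theorem prime_of_list_prod_eq_sub_one {N : ℕ} {l : List ℕ} (hl : ∀ r ∈ l, r.Prime)
    (hprod : l.prod = N - 1) (a : ZMod N) (ha : a ^ (N - 1) = 1)
    (hpow : ∀ r ∈ l, a ^ ((N - 1) / r) ≠ 1) : N.Prime := by
  refine lucas_primality N a ha fun r hr hrN ↦ ?_
  obtain ⟨s, hs, hrs⟩ := hr.prime.dvd_prod_iff.1 (hprod ▸ hrN)
  rw [(Nat.prime_dvd_prime_iff_eq hr (hl s hs)).1 hrs]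
  exact hpow s hs

theorem prime_314463126253 : Nat.Prime 314463126253 := by
  refine prime_of_list_prod_eq_sub_one (l := [2, 2, 3, 11, 11, 17, 757, 16829]) ?_ ?_ 2 ?_ ?_
  · norm_num
  · norm_num
  · reduce_mod_char
  · simp only [List.forall_mem_cons, Nat.reduceSub, Nat.reduceDiv]
    reduce_mod_char
    decide +kernel

theorem prime_74885226240553 : Nat.Prime 74885226240553 := by
  refine prime_of_list_prod_eq_sub_one (l := [2, 2, 2, 3, 7, 13, 461, 74377673]) ?_ ?_ 5 ?_ ?_
  · norm_num
  · norm_num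
  · reduce_mod_char
  · simp only [List.forall_mem_cons, Nat.reduceSub, Nat.reduceDiv]
    reduce_mod_char
    decide +kernel

theorem prime_943782488254293327455344316903 : Nat.Prime 943782488254293327455344316903 := by
  refine prime_of_list_prod_eq_sub_one
    (l := [2, 29, 691, 314463126253, 74885226240553]) ?_ ?_ 5 ?_ ?_
  · simp only [List.forall_mem_cons, prime_314463126253, prime_74885226240553]
    norm_num
  · norm_num
  · reduce_mod_char
  · simp only [List.forall_mem_cons, Nat.reduceSub, Nat.reduceDiv]
    reduce_mod_char
    decide +kernel

/-- The defining polynomial of the number field, taken over `ℤ` so that its values at integers can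
be factored; irreducibility passes to `ℚ` by Gauss's lemma. -/
noncomputable def fieldPolynomial : ℤ[X] :=
  X ^ 24 - 6 * X ^ 23 + 21 * X ^ 22 - 60 * X ^ 21 + 184 * X ^ 20
    - 478 * X ^ 19 + 651 * X ^ 18 - 1220 * X ^ 17 + 2230 * X ^ 16 + 1226 * X ^ 15
    - 947 * X ^ 14 + 804 * X ^ 13 - 7092 * X ^ 12 - 6862 * X ^ 11 + 3971 * X ^ 10
    - 15340 * X ^ 9 + 7975 * X ^ 8 + 36044 * X ^ 7 + 7134 * X ^ 6 + 14896 * X ^ 5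
    + 13928 * X ^ 4 - 2372 * X ^ 3 + 3970 * X ^ 2 - 584 * X + 22

theorem fieldPolynomial_monic : fieldPolynomial.Monic := by
  unfold fieldPolynomial
  monicity!

theorem fieldPolynomial_natDegree : fieldPolynomial.natDegree = 24 := by
  unfold fieldPolynomial
  compute_degree!

theorem fieldPolynomial_eval_neg_eighteen :
    fieldPolynomial.eval (-18) = 2 * (943782488254293327455344316903 : ℕ) := by
  simp only [fieldPolynomial, eval_add, eval_sub, eval_mul, eval_pow, eval_X, eval_ofNat]
  norm_num

theorem norm_lt_ten_of_aeval_fieldPolynomial_eq_zero {z : ℂ} (hz : aeval z fieldPolynomial = 0) :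
    ‖z‖ < 10 := by
  set p : ℂ[X] := fieldPolynomial.map (Int.castRingHom ℂ) with hp
  have hdeg : p.natDegree = 24 := by
    rw [hp, fieldPolynomial_monic.natDegree_map, fieldPolynomial_natDegree]
  have hlead : p.leadingCoeff = 1 := fieldPolynomial_monic.map _
  have hroot : p.IsRoot z := by rwa [aeval_def, ← eval_map] at hz
  refine norm_lt_of_sum_norm_coeff_mul_pow_lt (by norm_num) ?_ hroot
  rw [hdeg, hlead]
  norm_num [hp, fieldPolynomial, Finset.sum_range_succ, coeff_X, coeff_ofNat_mul]

theorem fieldPolynomial_irreducible : Irreducible fieldPolynomial := by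
  have hroots : ∀ z : ℂ, aeval z fieldPolynomial = 0 → (8 : ℝ) ≤ ‖((-18 : ℤ) : ℂ) - z‖ := by
    intro z hz
    have hz10 := norm_lt_ten_of_aeval_fieldPolynomial_eq_zero hz
    have hdist := norm_sub_norm_le ((-18 : ℤ) : ℂ) z
    rw [Complex.norm_intCast] at hdist
    norm_num at hdist ⊢
    linarith
  exact irreducible_of_eval_eq_mul_prime fieldPolynomial_monic.isPrimitive two_ne_zero
    prime_943782488254293327455344316903 fieldPolynomial_eval_neg_eighteen (by norm_num) hroots

/-- The degree-24 polynomial defining the number field `K` of the passport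
`16_0_3_2_1_11_a` is irreducible over `ℚ`. -/
theorem degree_24_field_polynomial_irreducible :
    Irreducible
      ((X : ℚ[X]) ^ 24 - 6 * X ^ 23 + 21 * X ^ 22 - 60 * X ^ 21 + 184 * X ^ 20
        - 478 * X ^ 19 + 651 * X ^ 18 - 1220 * X ^ 17 + 2230 * X ^ 16 + 1226 * X ^ 15
        - 947 * X ^ 14 + 804 * X ^ 13 - 7092 * X ^ 12 - 6862 * X ^ 11 + 3971 * X ^ 10
        - 15340 * X ^ 9 + 7975 * X ^ 8 + 36044 * X ^ 7 + 7134 * X ^ 6 + 14896 * X ^ 5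
        + 13928 * X ^ 4 - 2372 * X ^ 3 + 3970 * X ^ 2 - 584 * X + 22) := by
  have h := fieldPolynomial_monic.isPrimitive.irreducible_iff_irreducible_map_fraction_map (K := ℚ)
    |>.1 fieldPolynomial_irreducible
  simpa [fieldPolynomial] using h
end

section
/- The Galois group over ℚ of the polynomial p(v) = v²⁴ − 6v²³ + 21v²² − 60v²¹ + 184v²⁰ − 478v¹⁹ + 651v¹⁸ − 1220v¹⁷ + 2230v¹⁶ + 1226v¹⁵ − 947v¹⁴ + 804v¹³ − 7092v¹² − 6862v¹¹ + 3971v¹⁰ − 15340v⁹ + 7975v⁸ + 36044v⁷ + 7134v⁶ + 14896v⁵ + 13928v⁴ − 2372v³ + 3970v² − 584v + 22 (i.e. the Galois group of its splitting field over ℚ) is isomorphic to the full symmetric group S₂₄ on 24 letters. -/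
open Polynomial

/-!
For a prime `p` modulo which the polynomial is separable, the Galois group contains a permutation
of the roots conjugate to the Frobenius `x ↦ x ^ p` on the roots modulo `p`. For `p = 83` it is a
`23`-cycle with one fixed root; for `p = 101` it fixes no root and its `11`th power is a
transposition. So the group is doubly transitive and contains a transposition, hence is `S₂₄`.

If `f ∣ a * (X ^ (p ^ m) - X)` modulo `p`, then the `m`th power of Frobenius fixes all roots of `f`
other than those of `a`. Such divisibilities, checked on coefficient lists, and the roots of `f` in
`𝔽_p` determine both cycle structures, because `23` and `11` are prime.
-/

section PermutationGroups

open Equiv.Perm MulAction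

variable {α : Type*} {G : Subgroup (Equiv.Perm α)}
  {c s : Equiv.Perm α}

lemma exists_forall_apply_eq_self_iff [Fintype α] [DecidableEq α]
    (h : c.support.card + 1 = Fintype.card α) :
    ∃ a₀, ∀ a, c a = a ↔ a = a₀ := by
  have hcompl : c.supportᶜ.card = 1 := by rw [Finset.card_compl]; lia
  obtain ⟨a₀, ha₀⟩ := Finset.card_eq_one.mp hcompl
  exact ⟨a₀, fun a => by
    rw [← notMem_support, ← Finset.mem_compl, ha₀, Finset.mem_singleton]⟩

lemma exists_mem_apply_eq_of_isCycle {a₀ : α} (hcG : c ∈ G) (hc : c.IsCycle)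
    (hfix : ∀ a, c a = a ↔ a = a₀) (hmove : ∃ t ∈ G, t a₀ ≠ a₀) (a : α) :
    ∃ g ∈ G, g a = a₀ := by
  by_cases ha : a = a₀
  · exact ⟨1, G.one_mem, ha⟩
  obtain ⟨t, htG, ht⟩ := hmove
  have ht' : t⁻¹ a₀ ≠ a₀ := fun h => ht (inv_eq_iff_eq.mp h).symm
  obtain ⟨i, hi⟩ := hc.exists_zpow_eq (mt (hfix a).mp ha) (mt (hfix _).mp ht')
  exact ⟨t * c ^ i, G.mul_mem htG (G.zpow_mem hcG i), by simp [hi]⟩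

lemma isMultiplyPretransitive_two_of_isCycle {a₀ : α} (hcG : c ∈ G) (hc : c.IsCycle)
    (hfix : ∀ a, c a = a ↔ a = a₀) (hmove : ∃ t ∈ G, t a₀ ≠ a₀) :
    IsMultiplyPretransitive G α 2 := by
  obtain ⟨b₀, hb₀, -⟩ := id hc
  have to_base : ∀ a b, a ≠ b → ∃ g : G, g • a = a₀ ∧ g • b = b₀ := by
    intro a b hab
    obtain ⟨g, hg, hga⟩ := exists_mem_apply_eq_of_isCycle hcG hc hfix hmove a
    have hgb : g b ≠ a₀ := fun h => hab (g.injective (hga.trans h.symm))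
    obtain ⟨i, hi⟩ := hc.exists_zpow_eq (mt (hfix _).mp hgb) hb₀
    refine ⟨⟨c ^ i * g, G.mul_mem (G.zpow_mem hcG i) hg⟩, ?_, hi⟩
    change (c ^ i) (g a) = a₀
    rw [hga, zpow_apply_eq_self_of_apply_eq_self ((hfix a₀).mpr rfl)]
  rw [is_two_pretransitive_iff]
  intro a b d e hab hde
  obtain ⟨g, hga, hgb⟩ := to_base a b hab
  obtain ⟨k, hkd, hke⟩ := to_base d e hde
  exact ⟨k⁻¹ * g, by rw [mul_smul, hga, inv_smul_eq_iff, hkd],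
    by rw [mul_smul, hgb, inv_smul_eq_iff, hke]⟩

theorem subgroup_eq_top_of_isCycle_of_isSwap_mem [Fintype α] [DecidableEq α] (hcG : c ∈ G)
    (hc : c.IsCycle) (hcard : c.support.card + 1 = Fintype.card α) (hmove : ∀ a, ∃ t ∈ G, t a ≠ a)
    (hsG : s ∈ G) (hs : s.IsSwap) : G = ⊤ := by
  obtain ⟨a₀, hfix⟩ := exists_forall_apply_eq_self_iff hcard
  exact subgroup_eq_top_of_isPreprimitive_of_isSwap_mem
    (isPreprimitive_of_is_two_pretransitive
      (isMultiplyPretransitive_two_of_isCycle hcG hc hfix (hmove a₀))) s hs hsG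

lemma isCycle_of_pow_prime_eq_one [Fintype α] [DecidableEq α] {q : ℕ} (hq : q.Prime)
    (hpow : c ^ q = 1) (hfix : c.supportᶜ.card ≤ 1) (hα : Fintype.card α = q + 1) :
    c.IsCycle ∧ c.support.card = q := by
  have le_support : q ≤ c.support.card := by rw [Finset.card_compl] at hfix; lia
  have support_le : c.support.card ≤ q + 1 := hα ▸ Finset.card_le_univ _
  have ne_one : c ≠ 1 := by rintro rfl; simp [hq.ne_zero] at le_support
  have : Fact q.Prime := ⟨hq⟩
  have order : orderOf c = q := orderOf_eq_prime hpow ne_one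
  have cycle : c.IsCycle := isCycle_of_prime_order (order ▸ hq) (by have := hq.two_le; lia)
  exact ⟨cycle, cycle.orderOf.symm.trans order⟩

lemma isSwap_pow_prime [Fintype α] [DecidableEq α] {q : ℕ} (hq : q.Prime)
    (hfix : ∀ a, c a ≠ a) (hsupport : (c ^ q).support.card ≤ 2) (hα : ¬ q ∣ Fintype.card α) :
    (c ^ q).IsSwap := by
  have : Fact q.Prime := ⟨hq⟩
  have ne_one : c ^ q ≠ 1 := by
    intro h
    have support_eq : c.support = Finset.univ := Finset.eq_univ_of_forall fun a =>
      mem_support.mpr (hfix a)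
    have modEq := card_compl_support_modEq (p := q) (n := 1) (σ := c) (by rwa [pow_one])
    rw [support_eq, Finset.compl_univ, Finset.card_empty] at modEq
    exact hα ((Nat.modEq_zero_iff_dvd).mp modEq.symm)
  exact card_support_eq_two.mp (hsupport.antisymm (one_lt_card_support_of_ne_one ne_one))

end PermutationGroups

/-- `c` is conjugate, through a bijection of `α` with the roots of `f` in an algebraic closure of
`𝔽_p`, to the permutation `x ↦ x ^ p` of these roots. -/
def IsFrobeniusPerm (p : ℕ) [Fact p.Prime] (f : (ZMod p)[X]) {α : Type*} (c : Equiv.Perm α) :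
    Prop :=
  ∃ ρ : α ≃ f.rootSet (AlgebraicClosure (ZMod p)),
    ∀ a, (ρ (c a) : AlgebraicClosure (ZMod p)) = ρ a ^ p

namespace IsFrobeniusPerm

variable {p : ℕ} [Fact p.Prime] {f : (ZMod p)[X]} {α : Type*} {c : Equiv.Perm α}

lemma card_eq_natDegree [Fintype α] (hc : IsFrobeniusPerm p f c) (hf : f.Separable) :
    Fintype.card α = f.natDegree := by
  obtain ⟨ρ, -⟩ := hc
  rw [Fintype.card_congr ρ, card_rootSet_eq_natDegree hf (IsAlgClosed.splits _)]

lemma apply_pow {ρ : α ≃ f.rootSet (AlgebraicClosure (ZMod p))}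
    (hρ : ∀ a, (ρ (c a) : AlgebraicClosure (ZMod p)) = ρ a ^ p) (m : ℕ) (a : α) :
    (ρ ((c ^ m) a) : AlgebraicClosure (ZMod p)) = ρ a ^ p ^ m := by
  induction m with
  | zero => simp
  | succ m ih => rw [pow_succ', Equiv.Perm.mul_apply, hρ, ih, ← pow_mul, pow_succ]

lemma exists_isRoot_of_apply_eq_self {ρ : α ≃ f.rootSet (AlgebraicClosure (ZMod p))}
    (hρ : ∀ a, (ρ (c a) : AlgebraicClosure (ZMod p)) = ρ a ^ p) {a : α} (ha : c a = a) :
    ∃ z, f.IsRoot z ∧ algebraMap (ZMod p) (AlgebraicClosure (ZMod p)) z = ρ a := by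
  have fixed : (ρ a : AlgebraicClosure (ZMod p)) ^ p = ρ a := by rw [← hρ, ha]
  have prime_field := (Subfield.mem_bot_iff_pow_eq_self _ p).mpr fixed
  rw [← ZMod.fieldRange_castHom_eq_bot p] at prime_field
  obtain ⟨z, hz⟩ := prime_field
  replace hz : algebraMap (ZMod p) (AlgebraicClosure (ZMod p)) z = ρ a :=
    (DFunLike.congr_fun (Subsingleton.elim _ _) z).trans hz
  refine ⟨z, ?_, hz⟩
  have root := aeval_eq_zero_of_mem_rootSet (ρ a).2
  rwa [← hz, aeval_algebraMap_eq_zero_iff, coe_aeval_eq_eval] at root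

lemma apply_ne (hc : IsFrobeniusPerm p f c) (hroot : ∀ x, ¬ f.IsRoot x) (a : α) : c a ≠ a := by
  obtain ⟨ρ, hρ⟩ := hc
  intro ha
  obtain ⟨z, hz, -⟩ := exists_isRoot_of_apply_eq_self hρ ha
  exact hroot z hz

variable [Fintype α] [DecidableEq α]

lemma card_support_pow_le (hc : IsFrobeniusPerm p f c) {a : (ZMod p)[X]} (ha : a ≠ 0) {m : ℕ}
    (hdvd : f ∣ a * (X ^ p ^ m - X)) : (c ^ m).support.card ≤ a.natDegree := by
  obtain ⟨ρ, hρ⟩ := hc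
  classical
  let toRoot : α → AlgebraicClosure (ZMod p) := fun x => ρ x
  have inj : Function.Injective toRoot := Subtype.val_injective.comp ρ.injective
  have sub : (c ^ m).support.image toRoot ⊆ (a.aroots (AlgebraicClosure (ZMod p))).toFinset := by
    intro y hy
    obtain ⟨x, hx, rfl⟩ := Finset.mem_image.mp hy
    have vanish := aeval_eq_zero_of_dvd_aeval_eq_zero hdvd (aeval_eq_zero_of_mem_rootSet (ρ x).2)
    rw [map_mul, map_sub, map_pow, aeval_X, ← apply_pow hρ, mul_eq_zero, sub_eq_zero] at vanish
    rw [Multiset.mem_toFinset, mem_aroots]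
    exact ⟨ha, vanish.resolve_right fun h => Equiv.Perm.mem_support.mp hx (inj h)⟩
  calc (c ^ m).support.card = ((c ^ m).support.image toRoot).card :=
        (Finset.card_image_of_injective _ inj).symm
    _ ≤ (a.aroots (AlgebraicClosure (ZMod p))).toFinset.card := Finset.card_le_card sub
    _ ≤ (a.aroots (AlgebraicClosure (ZMod p))).card := Multiset.toFinset_card_le _
    _ ≤ a.natDegree := (card_roots' _).trans natDegree_map_le

lemma card_compl_support_le (hc : IsFrobeniusPerm p f c) {S : Finset (ZMod p)}
    (hS : ∀ x, f.IsRoot x → x ∈ S) : c.supportᶜ.card ≤ S.card := by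
  obtain ⟨ρ, hρ⟩ := hc
  classical
  let toRoot : α → AlgebraicClosure (ZMod p) := fun x => ρ x
  have inj : Function.Injective toRoot := Subtype.val_injective.comp ρ.injective
  have sub : c.supportᶜ.image toRoot ⊆ S.image (algebraMap _ _) := by
    intro y hy
    obtain ⟨x, hx, rfl⟩ := Finset.mem_image.mp hy
    rw [Finset.mem_compl, Equiv.Perm.notMem_support] at hx
    obtain ⟨z, root, hz⟩ := exists_isRoot_of_apply_eq_self hρ hx
    exact Finset.mem_image.mpr ⟨z, hS z root, hz⟩
  calc c.supportᶜ.card = (c.supportᶜ.image toRoot).card :=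
        (Finset.card_image_of_injective _ inj).symm
    _ ≤ (S.image (algebraMap _ _)).card := Finset.card_le_card sub
    _ ≤ S.card := Finset.card_image_le

end IsFrobeniusPerm

section Reduction

variable {R A B : Type*} [CommRing R] [CommRing A] [IsDomain A] [Algebra R A]

lemma rootSet_map_algebraMap [CommRing B] [Algebra R B] [Algebra B A] [IsScalarTower R B A]
    (f : R[X]) : (f.map (algebraMap R B)).rootSet A = f.rootSet A := by
  simp only [rootSet, aroots, map_map, ← IsScalarTower.algebraMap_eq]

lemma bijOn_rootSet_of_separable [Field B] [Algebra R B] {f : R[X]}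
    (hf : (f.map (algebraMap R A)).Splits) (hsep : (f.map (algebraMap R B)).Separable)
    (φ : A →ₐ[R] B) : Set.BijOn φ (f.rootSet A) (f.rootSet B) := by
  classical
  have image := hf.image_rootSet_of_map_ne_zero φ hsep.ne_zero
  have map_map_eq : (f.map (algebraMap R A)).map (φ : A →+* B) = f.map (algebraMap R B) := by
    rw [map_map, φ.comp_algebraMap]
  have nodup : ((f.aroots A).map φ).Nodup := by
    have := nodup_roots hsep
    rwa [← map_map_eq, hf.roots_map_of_ne_zero (map_map_eq ▸ hsep.ne_zero)] at this
  refine ⟨image ▸ Set.mapsTo_image φ _, fun x hx y hy hxy => ?_, image.ge⟩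
  exact Multiset.inj_on_of_nodup_map nodup x (by simpa [rootSet] using hx) y
    (by simpa [rootSet] using hy) hxy

end Reduction

section NumberFields

open NumberField

variable (E : Type*) [Field E]

theorem exists_frobenius_reduction [NumberField E] [IsGalois ℚ E] (p : ℕ) [Fact p.Prime] :
    ∃ (σ : Gal(E/ℚ)) (ψ : 𝓞 E →+* AlgebraicClosure (ZMod p)), ∀ x, ψ (σ • x) = ψ x ^ p := by
  have hp : Prime (p : ℤ) := Nat.prime_iff_prime_int.mp Fact.out
  let P : Ideal ℤ := Ideal.span {(p : ℤ)}
  have : P.IsPrime := (Ideal.span_singleton_prime hp.ne_zero).mpr hp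
  have : P.IsMaximal := this.isMaximal (by simpa [P] using hp.ne_zero)
  obtain ⟨Q, _, hQP⟩ := Ideal.exists_maximal_ideal_liesOver_of_isIntegral P (S := 𝓞 E)
  have card_residue : Nat.card (ℤ ⧸ Q.under ℤ) = p := by
    rw [← hQP.over]; exact Int.card_ideal_quot p
  have : Finite (𝓞 E ⧸ Q) :=
    Q.finiteQuotientOfFreeOfNeBot (Q.bot_lt_of_maximal (RingOfIntegers.not_isField E)).ne'
  obtain ⟨σ, hσ⟩ := IsArithFrobAt.exists_of_isInvariant ℤ Gal(E/ℚ) Q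
  let _ : Field (𝓞 E ⧸ Q) := Ideal.Quotient.field Q
  have p_eq_zero : ((p : ℕ) : 𝓞 E ⧸ Q) = 0 := by
    have : algebraMap ℤ (𝓞 E) p ∈ Q :=
      (hQP.over ▸ Ideal.mem_span_singleton_self _ : (p : ℤ) ∈ Q.under ℤ)
    simpa using Ideal.Quotient.eq_zero_iff_mem.mpr this
  have : CharP (𝓞 E ⧸ Q) p := (CharP.charP_iff_prime_eq_zero Fact.out).mpr p_eq_zero
  let _ : Algebra (ZMod p) (𝓞 E ⧸ Q) := ZMod.algebra _ p
  let ι : 𝓞 E ⧸ Q →ₐ[ZMod p] AlgebraicClosure (ZMod p) := IsAlgClosed.lift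
  refine ⟨σ, (ι : 𝓞 E ⧸ Q →+* _).comp (Ideal.Quotient.mk Q), fun x => ?_⟩
  have frob_mk := hσ.mk_apply x
  rw [card_residue] at frob_mk
  exact (congrArg ι frob_mk).trans (map_pow ι _ p)

lemma splits_ringOfIntegers [NumberField E] {f : ℤ[X]} (hf : f.Monic)
    (hE : (f.map (algebraMap ℤ E)).Splits) : (f.map (algebraMap ℤ (𝓞 E))).Splits := by
  have map_map_eq : (f.map (algebraMap ℤ (𝓞 E))).map (algebraMap (𝓞 E) E) =
      f.map (algebraMap ℤ E) := by rw [map_map, ← IsScalarTower.algebraMap_eq]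
  refine Splits.of_splits_map_of_injective (i := algebraMap (𝓞 E) E)
    RingOfIntegers.coe_injective (map_map_eq ▸ hE) fun a ha => ?_
  have : IsIntegral ℤ a := ⟨f, hf, by
    have root := (mem_roots'.mp ha).2
    rwa [map_map_eq, IsRoot, eval_map] at root⟩
  exact ⟨⟨a, this⟩, rfl⟩

lemma bijOn_rootSet_ringOfIntegers [NumberField E] {f : ℤ[X]} (hf : f.Monic)
    (hE : (f.map (algebraMap ℤ E)).Splits) :
    Set.BijOn (algebraMap (𝓞 E) E) (f.rootSet (𝓞 E)) ((f.map (algebraMap ℤ ℚ)).rootSet E) := by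
  rw [rootSet_map_algebraMap]
  have image := (splits_ringOfIntegers E hf hE).image_rootSet_of_map_ne_zero
    (IsScalarTower.toAlgHom ℤ (𝓞 E) E) (hf.map _).ne_zero
  exact ⟨image ▸ Set.mapsTo_image _ _, RingOfIntegers.coe_injective.injOn, image.ge⟩

theorem exists_isFrobeniusPerm [NumberField E] [IsGalois ℚ E] {f : ℤ[X]} (hf : f.Monic)
    [hE : Fact ((f.map (algebraMap ℤ ℚ)).map (algebraMap ℚ E)).Splits] (p : ℕ) [Fact p.Prime]
    (hsep : (f.map (algebraMap ℤ (ZMod p))).Separable) :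
    ∃ c ∈ (Gal.galActionHom (f.map (algebraMap ℤ ℚ)) E).range,
      IsFrobeniusPerm p (f.map (algebraMap ℤ (ZMod p))) c := by
  obtain ⟨σ, ψ, hψ⟩ := exists_frobenius_reduction E p
  have splits_E : (f.map (algebraMap ℤ E)).Splits := by
    simpa only [map_map, ← IsScalarTower.algebraMap_eq] using hE.out
  have splits_int := splits_ringOfIntegers E hf splits_E
  have separable : (f.map (algebraMap ℤ (AlgebraicClosure (ZMod p)))).Separable := by
    have := hsep.map (f := algebraMap (ZMod p) (AlgebraicClosure (ZMod p)))
    rwa [map_map, ← IsScalarTower.algebraMap_eq] at this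
  let reduce := (bijOn_rootSet_of_separable splits_int separable ψ.toIntAlgHom).equiv
  let lift := (bijOn_rootSet_ringOfIntegers E hf splits_E).equiv.symm
  have coe_lift : ∀ a, algebraMap (𝓞 E) E (lift a) = a := fun a =>
    congrArg Subtype.val (lift.symm_apply_apply a)
  let c := Gal.galActionHom (f.map (algebraMap ℤ ℚ)) E (Gal.restrict _ E σ)
  have lift_apply : ∀ a, (lift (c a) : 𝓞 E) = σ • (lift a : 𝓞 E) := by
    intro a
    apply RingOfIntegers.coe_injective
    rw [coe_lift, Gal.galActionHom_restrict, ← coe_lift]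
    rfl
  refine ⟨c, ⟨_, rfl⟩, (lift.trans reduce).trans
    (Equiv.setCongr (rootSet_map_algebraMap f)).symm, fun a => ?_⟩
  change ψ (lift (c a)) = ψ (lift a) ^ p
  rw [lift_apply, hψ]

lemma exists_isGalois_numberField_splits (F : ℚ[X]) :
    ∃ (E : Type) (_ : Field E) (_ : NumberField E), IsGalois ℚ E ∧
      (F.map (algebraMap ℚ E)).Splits := by
  have : NumberField F.SplittingField :=
    { to_charZero := inferInstance, to_finiteDimensional := inferInstance }
  have : IsSplittingField ℚ F.SplittingField F := by
    convert! IsSplittingField.splittingField F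
  have : Normal ℚ F.SplittingField := Normal.of_isSplittingField F
  exact ⟨F.SplittingField, inferInstance, inferInstance, ⟨⟩, IsSplittingField.splits _ F⟩

end NumberFields

lemma separable_of_dvd_X_pow_sub_X {p : ℕ} [Fact p.Prime] {f : (ZMod p)[X]} {m : ℕ} (hm : m ≠ 0)
    (h : f ∣ X ^ p ^ m - X) : f.Separable :=
  (galois_poly_separable p (p ^ m) (dvd_pow_self p hm)).of_dvd h

section CoefficientLists

variable {A : Type*} [CommRing A]

/-- The polynomial `a₀ + a₁ X + a₂ X² + ⋯` with coefficient list `[a₀, a₁, a₂, …]`. -/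
noncomputable def ofCoeffs (l : List A) : A[X] :=
  l.foldr (fun a q => C a + X * q) 0

/-- The monic polynomial `X ^ n - (g₀ + g₁ X + ⋯ + gₙ₋₁ X ^ (n - 1))`, given by the remainder
`g` of `X ^ n` modulo it. -/
noncomputable def monicOfCoeffs (g : List A) : A[X] :=
  X ^ g.length - ofCoeffs g

/-- The coefficient list of `l + a • m`. -/
def addMulCoeffs (a : A) : List A → List A → List A
  | l, [] => l
  | [], c :: m => a * c :: addMulCoeffs a [] m
  | b :: l, c :: m => (b + a * c) :: addMulCoeffs a l m

/-- Multiplication by `X` modulo `monicOfCoeffs g`, for lists no longer than `g`. -/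
def mulXCoeffs (g l : List A) : List A :=
  if l.length = g.length then addMulCoeffs (l.getLastD 0) (0 :: l.dropLast) g else 0 :: l

/-- The coefficient list of `l(X ^ k) * m` modulo `monicOfCoeffs g`, by Horner's scheme. -/
def expandMulCoeffs (g : List A) (k : ℕ) : List A → List A → List A
  | [], _ => []
  | a :: l, m => addMulCoeffs a (expandMulCoeffs g k l ((mulXCoeffs g)^[k] m)) m

lemma ofCoeffs_nil : ofCoeffs ([] : List A) = 0 := rfl

lemma ofCoeffs_cons (a : A) (l : List A) : ofCoeffs (a :: l) = C a + X * ofCoeffs l := rfl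

lemma ofCoeffs_append_singleton (l : List A) (a : A) :
    ofCoeffs (l ++ [a]) = ofCoeffs l + C a * X ^ l.length := by
  induction l with
  | nil => simp [ofCoeffs]
  | cons b l ih => rw [List.cons_append, ofCoeffs_cons, ih, ofCoeffs_cons, List.length_cons]; ring

lemma degree_ofCoeffs_lt (l : List A) : (ofCoeffs l).degree < l.length := by
  induction l using List.reverseRecOn with
  | nil => simp [ofCoeffs]
  | append_singleton l a ih =>
    rw [ofCoeffs_append_singleton, List.length_append, List.length_singleton]
    refine (degree_add_le _ _).trans_lt (max_lt (ih.trans ?_) ?_)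
    · exact_mod_cast Nat.lt_succ_self _
    · exact (degree_C_mul_X_pow_le _ _).trans_lt (by exact_mod_cast Nat.lt_succ_self _)

lemma ofCoeffs_one : ofCoeffs ([1] : List A) = 1 := by simp [ofCoeffs]

lemma map_ofCoeffs {B : Type*} [CommRing B] (φ : A →+* B) (l : List A) :
    (ofCoeffs l).map φ = ofCoeffs (l.map φ) := by
  induction l with
  | nil => simp [ofCoeffs]
  | cons a l ih => simp [ofCoeffs_cons, ih]

lemma eval_ofCoeffs (x : A) (l : List A) :
    (ofCoeffs l).eval x = l.foldr (fun a y => a + x * y) 0 := by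
  induction l with
  | nil => simp [ofCoeffs]
  | cons a l ih => simp [ofCoeffs_cons, ih]

lemma ofCoeffs_eq_zero_iff {l : List A} : ofCoeffs l = 0 ↔ ∀ a ∈ l, a = 0 := by
  induction l with
  | nil => simp [ofCoeffs_nil]
  | cons a l ih =>
    rw [List.forall_mem_cons, ← ih, ofCoeffs_cons]
    refine ⟨fun h => ?_, fun h => by rw [h.1, h.2, C_0, mul_zero, add_zero]⟩
    have a_eq_zero : a = 0 := by simpa using congrArg (coeff · 0) h
    rw [a_eq_zero, C_0, zero_add] at h
    exact ⟨a_eq_zero, isRegular_X.left (h.trans (mul_zero X).symm)⟩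

lemma monic_monicOfCoeffs (g : List A) : (monicOfCoeffs g).Monic :=
  monic_X_pow_sub (degree_ofCoeffs_lt g)

lemma natDegree_monicOfCoeffs [Nontrivial A] (g : List A) :
    (monicOfCoeffs g).natDegree = g.length := by
  apply natDegree_eq_of_degree_eq_some
  rw [monicOfCoeffs, degree_sub_eq_left_of_degree_lt, degree_X_pow]
  rw [degree_X_pow]
  exact degree_ofCoeffs_lt g

lemma map_monicOfCoeffs {B : Type*} [CommRing B] (φ : A →+* B) (g : List A) :
    (monicOfCoeffs g).map φ = monicOfCoeffs (g.map φ) := by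
  simp [monicOfCoeffs, map_ofCoeffs]

lemma isRoot_monicOfCoeffs_iff {x : A} {g : List A} :
    (monicOfCoeffs g).IsRoot x ↔ x ^ g.length = g.foldr (fun a y => a + x * y) 0 := by
  rw [IsRoot, monicOfCoeffs, eval_sub, eval_pow, eval_X, eval_ofCoeffs, sub_eq_zero]

lemma ofCoeffs_addMulCoeffs (a : A) (l m : List A) :
    ofCoeffs (addMulCoeffs a l m) = ofCoeffs l + C a * ofCoeffs m := by
  induction l, m using addMulCoeffs.induct with
  | case1 l => simp [addMulCoeffs, ofCoeffs_nil]
  | case2 c m ih =>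
    rw [addMulCoeffs, ofCoeffs_cons, ih, ofCoeffs_cons, ofCoeffs_nil, C_mul]; ring
  | case3 b l c m ih =>
    rw [addMulCoeffs, ofCoeffs_cons, ih, ofCoeffs_cons, ofCoeffs_cons, C_add, C_mul]; ring

lemma mk_ofCoeffs_mulXCoeffs (g l : List A) :
    AdjoinRoot.mk (monicOfCoeffs g) (ofCoeffs (mulXCoeffs g l)) =
      AdjoinRoot.mk (monicOfCoeffs g) (X * ofCoeffs l) := by
  unfold mulXCoeffs
  split_ifs with hlen
  · rcases List.eq_nil_or_concat l with rfl | ⟨l, a, rfl⟩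
    · simp [addMulCoeffs, ofCoeffs, List.eq_nil_of_length_eq_zero hlen.symm]
    rw [AdjoinRoot.mk_eq_mk]
    refine ⟨-C a, ?_⟩
    rw [List.concat_eq_append, List.length_append, List.length_singleton] at hlen
    rw [List.concat_eq_append, List.getLastD_concat, List.dropLast_concat,
      ofCoeffs_addMulCoeffs, ofCoeffs_cons, ofCoeffs_append_singleton, monicOfCoeffs, ← hlen, C_0]
    ring
  · rw [ofCoeffs_cons, C_0, zero_add]

lemma mk_ofCoeffs_iterate_mulXCoeffs (g l : List A) (k : ℕ) :
    AdjoinRoot.mk (monicOfCoeffs g) (ofCoeffs ((mulXCoeffs g)^[k] l)) =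
      AdjoinRoot.mk (monicOfCoeffs g) (X ^ k * ofCoeffs l) := by
  induction k with
  | zero => simp
  | succ k ih =>
    rw [Function.iterate_succ_apply', mk_ofCoeffs_mulXCoeffs, map_mul, ih, ← map_mul, pow_succ',
      mul_assoc]

lemma mk_ofCoeffs_expandMulCoeffs (g : List A) (k : ℕ) (l m : List A) :
    AdjoinRoot.mk (monicOfCoeffs g) (ofCoeffs (expandMulCoeffs g k l m)) =
      AdjoinRoot.mk (monicOfCoeffs g) (expand A k (ofCoeffs l) * ofCoeffs m) := by
  induction l generalizing m with
  | nil => simp [expandMulCoeffs, ofCoeffs_nil]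
  | cons a l ih =>
    rw [expandMulCoeffs, ofCoeffs_addMulCoeffs, map_add, ih, map_mul,
      mk_ofCoeffs_iterate_mulXCoeffs, ← map_mul, ← map_add, ofCoeffs_cons, map_add (expand A k),
      map_mul (expand A k), expand_C, expand_X]
    ring_nf

end CoefficientLists

section FrobeniusPowers

variable {p : ℕ}

/-- The coefficient list of `l ^ p` modulo `monicOfCoeffs g`, computed as `l(X ^ p)`. -/
def frobeniusCoeffs (g l : List (ZMod p)) : List (ZMod p) :=
  expandMulCoeffs g p l [1]

/-- The coefficient list of `a * (X ^ (p ^ m) - X)` modulo `monicOfCoeffs g`. -/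
def mulFrobeniusSubCoeffs (g a : List (ZMod p)) (m : ℕ) : List (ZMod p) :=
  expandMulCoeffs g 1 a (addMulCoeffs (-1) ((frobeniusCoeffs g)^[m] [0, 1]) [0, 1])

lemma mk_ofCoeffs_iterate_frobeniusCoeffs [Fact p.Prime] (g : List (ZMod p)) (m : ℕ) :
    AdjoinRoot.mk (monicOfCoeffs g) (ofCoeffs ((frobeniusCoeffs g)^[m] [0, 1])) =
      AdjoinRoot.mk (monicOfCoeffs g) (X ^ p ^ m) := by
  induction m with
  | zero => simp [ofCoeffs]
  | succ m ih =>
    rw [Function.iterate_succ_apply', frobeniusCoeffs, mk_ofCoeffs_expandMulCoeffs,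
      ofCoeffs_cons, ofCoeffs_nil, mul_zero, add_zero, C_1, mul_one, ZMod.expand_card, map_pow, ih,
      ← map_pow, ← pow_mul, pow_succ]

theorem monicOfCoeffs_dvd [Fact p.Prime] {g a : List (ZMod p)} {m : ℕ}
    (h : ∀ b ∈ mulFrobeniusSubCoeffs g a m, b = 0) :
    monicOfCoeffs g ∣ ofCoeffs a * (X ^ p ^ m - X) := by
  have mk_eq := mk_ofCoeffs_expandMulCoeffs g 1 a
    (addMulCoeffs (-1) ((frobeniusCoeffs g)^[m] [0, 1]) [0, 1])
  rw [← mulFrobeniusSubCoeffs, ofCoeffs_eq_zero_iff.mpr h, map_zero, expand_one,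
    ofCoeffs_addMulCoeffs, map_mul, map_add, mk_ofCoeffs_iterate_frobeniusCoeffs] at mk_eq
  rw [← AdjoinRoot.mk_eq_zero, map_mul, map_sub, mk_eq]
  simp [ofCoeffs, sub_eq_add_neg]

theorem separable_monicOfCoeffs [Fact p.Prime] {g : List (ZMod p)} {m : ℕ} (hm : m ≠ 0)
    (h : ∀ b ∈ mulFrobeniusSubCoeffs g [1] m, b = 0) : (monicOfCoeffs g).Separable :=
  separable_of_dvd_X_pow_sub_X hm (by
    simpa only [ofCoeffs_one, one_mul] using monicOfCoeffs_dvd h)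

theorem exists_isFrobeniusPerm_monicOfCoeffs (E : Type*) [Field E] [NumberField E] [IsGalois ℚ E]
    (g : List ℤ) [Fact (((monicOfCoeffs g).map (algebraMap ℤ ℚ)).map (algebraMap ℚ E)).Splits]
    [Fact p.Prime] (hsep : (monicOfCoeffs (g.map (↑) : List (ZMod p))).Separable) :
    ∃ c ∈ (Gal.galActionHom ((monicOfCoeffs g).map (algebraMap ℤ ℚ)) E).range,
      IsFrobeniusPerm p (monicOfCoeffs (g.map (↑))) c := by
  have map_eq : (monicOfCoeffs g).map (algebraMap ℤ (ZMod p)) = monicOfCoeffs (g.map (↑)) :=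
    map_monicOfCoeffs _ _
  rw [← map_eq] at hsep ⊢
  exact exists_isFrobeniusPerm E (monic_monicOfCoeffs g) p hsep

namespace IsFrobeniusPerm

variable [Fact p.Prime] {g : List (ZMod p)} {α : Type*} [Fintype α] {c : Equiv.Perm α}

lemma card_eq_length (hc : IsFrobeniusPerm p (monicOfCoeffs g) c)
    (hsep : (monicOfCoeffs g).Separable) : Fintype.card α = g.length :=
  (hc.card_eq_natDegree hsep).trans (natDegree_monicOfCoeffs g)

variable [DecidableEq α]

lemma card_support_pow_lt_length (hc : IsFrobeniusPerm p (monicOfCoeffs g) c) {a : List (ZMod p)}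
    (ha : ∃ b ∈ a, b ≠ 0) {m : ℕ} (h : ∀ b ∈ mulFrobeniusSubCoeffs g a m, b = 0) :
    (c ^ m).support.card < a.length := by
  have ne_zero : ofCoeffs a ≠ 0 := by rw [Ne, ofCoeffs_eq_zero_iff]; push Not; exact ha
  exact (hc.card_support_pow_le ne_zero (monicOfCoeffs_dvd h)).trans_lt
    ((natDegree_lt_iff_degree_lt ne_zero).mpr (degree_ofCoeffs_lt a))

lemma isCycle (hc : IsFrobeniusPerm p (monicOfCoeffs g) c) {q : ℕ} (hq : q.Prime)
    (h : ∀ b ∈ mulFrobeniusSubCoeffs g [1] q, b = 0)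
    {x₀ : ZMod p} (hroot : ∀ x, (monicOfCoeffs g).IsRoot x → x = x₀)
    (hα : Fintype.card α = q + 1) : c.IsCycle ∧ c.support.card = q := by
  have support_pow := hc.card_support_pow_lt_length ⟨1, by simp, one_ne_zero⟩ h
  have pow_eq_one : c ^ q = 1 := by simpa using support_pow
  refine isCycle_of_pow_prime_eq_one hq pow_eq_one ?_ hα
  exact hc.card_compl_support_le (S := {x₀}) fun x hx => Finset.mem_singleton.mpr (hroot x hx)

end IsFrobeniusPerm

end FrobeniusPowers

section Passport

/-- The list `g` for which the passport polynomial is `monicOfCoeffs g`; its entries are the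
negatives of the coefficients of `1, v, …, v ^ 23`. -/
def passportCoeffs : List ℤ :=
  [-22, 584, -3970, 2372, -13928, -14896, -7134, -36044, -7975, 15340, -3971, 6862, 7092, -804,
    947, -1226, -2230, 1220, -651, 478, -184, 60, -21, 6]

lemma map_monicOfCoeffs_passportCoeffs : (monicOfCoeffs passportCoeffs).map (algebraMap ℤ ℚ) =
    X ^ 24 - 6 * X ^ 23 + 21 * X ^ 22 - 60 * X ^ 21 + 184 * X ^ 20
      - 478 * X ^ 19 + 651 * X ^ 18 - 1220 * X ^ 17 + 2230 * X ^ 16 + 1226 * X ^ 15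
      - 947 * X ^ 14 + 804 * X ^ 13 - 7092 * X ^ 12 - 6862 * X ^ 11 + 3971 * X ^ 10
      - 15340 * X ^ 9 + 7975 * X ^ 8 + 36044 * X ^ 7 + 7134 * X ^ 6 + 14896 * X ^ 5
      + 13928 * X ^ 4 - 2372 * X ^ 3 + 3970 * X ^ 2 - 584 * X + 22 := by
  simp only [monicOfCoeffs, passportCoeffs, ofCoeffs, List.length_cons, List.length_nil,
    Nat.reduceAdd, List.foldr_cons, List.foldr_nil, algebraMap_int_eq, eq_intCast, Int.reduceNeg,
    Int.cast_neg, Int.cast_ofNat, Polynomial.map_sub, Polynomial.map_add, Polynomial.map_mul,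
    Polynomial.map_pow, Polynomial.map_neg, Polynomial.map_ofNat, map_X, zero_add, mul_zero,
    add_zero]
  ring

/-- The passport coefficients modulo `p`. -/
def passportCoeffsMod (p : ℕ) : List (ZMod p) :=
  passportCoeffs.map (↑)

instance fact_prime_83 : Fact (Nat.Prime 83) := ⟨by norm_num⟩

instance fact_prime_101 : Fact (Nat.Prime 101) := ⟨by norm_num⟩

set_option maxRecDepth 100000 in
lemma mulFrobeniusSubCoeffs_83 :
    ∀ b ∈ mulFrobeniusSubCoeffs (passportCoeffsMod 83) [1] 23, b = 0 := by
  decide +kernel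

-- Modulo `101` the polynomial is `X ^ 2 + 67 X + 24` times two irreducible factors of degree `11`.
set_option maxRecDepth 100000 in
lemma mulFrobeniusSubCoeffs_101 :
    (∀ b ∈ mulFrobeniusSubCoeffs (passportCoeffsMod 101) [1] 22, b = 0) ∧
      ∀ b ∈ mulFrobeniusSubCoeffs (passportCoeffsMod 101) [24, 67, 1] 11, b = 0 := by
  decide +kernel

lemma isRoot_passport_83 (x : ZMod 83) (hx : (monicOfCoeffs (passportCoeffsMod 83)).IsRoot x) :
    x = 64 := by
  revert x
  simp only [isRoot_monicOfCoeffs_iff]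
  decide +kernel

lemma not_isRoot_passport_101 (x : ZMod 101) :
    ¬ (monicOfCoeffs (passportCoeffsMod 101)).IsRoot x := by
  revert x
  simp only [isRoot_monicOfCoeffs_iff]
  decide +kernel

lemma isSwap_pow_of_isFrobeniusPerm_101 {α : Type*} [Fintype α] [DecidableEq α]
    {c : Equiv.Perm α} (hα : Fintype.card α = 24)
    (hc : IsFrobeniusPerm 101 (monicOfCoeffs (passportCoeffsMod 101)) c) : (c ^ 11).IsSwap :=
  isSwap_pow_prime (by norm_num) (hc.apply_ne not_isRoot_passport_101)
    (Nat.le_of_lt_succ (hc.card_support_pow_lt_length ⟨1, by simp, one_ne_zero⟩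
      mulFrobeniusSubCoeffs_101.2)) (by rw [hα]; norm_num)

end Passport

/-- The Galois group over `ℚ` (i.e. the automorphism group of the splitting
field) of the degree-24 polynomial defining the number field `K` of the passport
`16_0_3_2_1_11_a` is isomorphic to the full symmetric group `S₂₄`. -/
theorem degree_24_field_polynomial_galois_group :
    Nonempty
      (Polynomial.Gal
        ((X : ℚ[X]) ^ 24 - 6 * X ^ 23 + 21 * X ^ 22 - 60 * X ^ 21 + 184 * X ^ 20
          - 478 * X ^ 19 + 651 * X ^ 18 - 1220 * X ^ 17 + 2230 * X ^ 16 + 1226 * X ^ 15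
          - 947 * X ^ 14 + 804 * X ^ 13 - 7092 * X ^ 12 - 6862 * X ^ 11 + 3971 * X ^ 10
          - 15340 * X ^ 9 + 7975 * X ^ 8 + 36044 * X ^ 7 + 7134 * X ^ 6 + 14896 * X ^ 5
          + 13928 * X ^ 4 - 2372 * X ^ 3 + 3970 * X ^ 2 - 584 * X + 22) ≃*
        Equiv.Perm (Fin 24)) := by
  rw [← map_monicOfCoeffs_passportCoeffs]
  obtain ⟨E, _, _, _, hE⟩ := exists_isGalois_numberField_splits
    ((monicOfCoeffs passportCoeffs).map (algebraMap ℤ ℚ))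
  have := Fact.mk hE
  classical
  have separable_83 := separable_monicOfCoeffs (by norm_num) mulFrobeniusSubCoeffs_83
  have separable_101 := separable_monicOfCoeffs (by norm_num) mulFrobeniusSubCoeffs_101.1
  obtain ⟨c, hcG, hc⟩ := exists_isFrobeniusPerm_monicOfCoeffs E passportCoeffs separable_83
  obtain ⟨t, htG, ht⟩ := exists_isFrobeniusPerm_monicOfCoeffs E passportCoeffs separable_101
  have card := hc.card_eq_length separable_83
  obtain ⟨cycle, card_support⟩ :=
    hc.isCycle (by norm_num) mulFrobeniusSubCoeffs_83 isRoot_passport_83 card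
  have range_eq_top := subgroup_eq_top_of_isCycle_of_isSwap_mem hcG cycle
    (by rw [card_support, card]; rfl) (fun a => ⟨t, htG, ht.apply_ne not_isRoot_passport_101 a⟩)
    (Subgroup.pow_mem _ htG 11) (isSwap_pow_of_isFrobeniusPerm_101 card ht)
  exact ⟨(MulEquiv.ofBijective _ ⟨Gal.galActionHom_injective _ E,
    MonoidHom.range_eq_top.mp range_eq_top⟩).trans
      (Equiv.permCongrHom (Fintype.equivFinOfCardEq card))⟩
end
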